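/- arXiv:2410.00369 — 3 statements merged into one kernel-verified Lean document; each statement's English description precedes it below -/
import Mathlib

section
/- Let M be a bounded open subset of ℝ^n (n ≥ 2), T > 0, and let Φ : (0,T) × M × S^{n-1} × S^{n-1} → ℂ be measurable and essentially bounded. For λ ∈ ℝ define 𝒦_λ(t,x,v) := ∫_{S^{n-1}} e^{−iλ x·v'} Φ(t,x,v,v') dσ(v'). Then ‖𝒦_λ‖_{L²((0,T) × M × S^{n-1})} → 0 as λ → +∞ and as λ → −∞. -/
/-!
The proof is a `T T*` argument. For fixed `(t, v)`, expanding the square and using Fubini,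
`∫_M |𝒦_λ(t,x,v)|² dx` equals the double integral over `(s, s') ∈ S^{n-1} × S^{n-1}` of
`∫_M e^{-iλ x·(s - s')} Φ(t,x,v,s) conj Φ(t,x,v,s') dx`. Off the diagonal `s = s'` the inner
integral tends to zero by the Riemann–Lebesgue lemma on `ℝⁿ` (`tendsto_integral_phase`), and the
diagonal is null because the surface measure has no atoms when `n ≥ 2`
(`sphereMeasure_noAtoms`). All measures involved are finite and `Φ` is bounded after modification
on a null set, so dominated convergence gives the limit of the double integral
(`tendsto_integral_normSq`) and then of the integral over `(t, v)` (`tendsto_lintegral_oscK`).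
-/

open MeasureTheory Metric Filter
open scoped RealInnerProductSpace ENNReal

/-- The standard surface measure on the unit sphere `S^{n-1} ⊆ ℝⁿ`. -/
noncomputable def sphereMeasure (n : ℕ) :
    Measure (sphere (0 : EuclideanSpace ℝ (Fin n)) 1) :=
  (volume : Measure (EuclideanSpace ℝ (Fin n))).toSphere

/-- `𝒦_λ(t,x,v) := ∫_{S^{n-1}} e^{−iλ x·v'} Φ(t,x,v,v') dσ(v')`. -/
noncomputable def oscK {n : ℕ}
    (Φ : ℝ → EuclideanSpace ℝ (Fin n) → sphere (0 : EuclideanSpace ℝ (Fin n)) 1 →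
      sphere (0 : EuclideanSpace ℝ (Fin n)) 1 → ℂ) (lam : ℝ)
    (t : ℝ) (x : EuclideanSpace ℝ (Fin n))
    (v : sphere (0 : EuclideanSpace ℝ (Fin n)) 1) : ℂ :=
  ∫ v', Complex.exp (-(Complex.I * (lam : ℂ) *
      ((⟪x, (v' : EuclideanSpace ℝ (Fin n))⟫ : ℝ) : ℂ))) * Φ t x v v' ∂(sphereMeasure n)

open scoped Pointwise in
/-- For `n ≥ 2` the surface measure of the sphere has no atoms: the cone over a point lies in a
line, which is a proper subspace of `ℝⁿ`. -/
theorem sphereMeasure_noAtoms {n : ℕ} (hn : 2 ≤ n) : NullSingletonClass (sphereMeasure n) := by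
  refine ⟨fun v => ?_⟩
  rw [sphereMeasure, Measure.toSphere_apply' _ (measurableSet_singleton v)]
  have hspan : Submodule.span ℝ {(v : EuclideanSpace ℝ (Fin n))} ≠ ⊤ := by
    intro h
    have h1 := finrank_span_singleton (K := ℝ) (ne_zero_of_mem_unit_sphere v)
    rw [h, finrank_top, finrank_euclideanSpace_fin] at h1
    omega
  have h0 : volume (Set.Ioo (0 : ℝ) 1 •
      ((↑) '' {v} : Set (EuclideanSpace ℝ (Fin n)))) = 0 := by
    refine measure_mono_null ?_ (Measure.addHaar_submodule volume _ hspan)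
    rintro _ ⟨r, -, _, ⟨w, rfl, rfl⟩, rfl⟩
    exact Submodule.smul_mem _ _ (Submodule.mem_span_singleton_self _)
  rw [h0, mul_zero]

/-- The phase `e^{-iλ x·s}` occurring in `oscK`. -/
noncomputable def phase {n : ℕ} (lam : ℝ) (x s : EuclideanSpace ℝ (Fin n)) : ℂ :=
  Complex.exp (-(Complex.I * (lam : ℂ) * ((⟪x, s⟫ : ℝ) : ℂ)))

theorem norm_phase {n : ℕ} (lam : ℝ) (x s : EuclideanSpace ℝ (Fin n)) :
    ‖phase lam x s‖ = 1 := by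
  rw [phase, Complex.norm_exp]
  simp

theorem measurable_phase {n : ℕ} (lam : ℝ) : Measurable fun p : EuclideanSpace ℝ (Fin n) ×
    EuclideanSpace ℝ (Fin n) => phase lam p.1 p.2 := by
  have hc : Continuous fun p : EuclideanSpace ℝ (Fin n) × EuclideanSpace ℝ (Fin n) =>
      phase lam p.1 p.2 := by
    unfold phase
    fun_prop
  exact hc.measurable

theorem phase_mul_conj {n : ℕ} (lam : ℝ) (x s s' : EuclideanSpace ℝ (Fin n)) :
    phase lam x s * (starRingEnd ℂ) (phase lam x s') = phase lam x (s - s') := by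
  simp only [phase, ← Complex.exp_conj, ← Complex.exp_add, inner_sub_right]
  congr 1
  simp
  ring

/-- Riemann–Lebesgue along a line: for a nonzero direction `d`, the Fourier transform of
`1_M f` at frequency `λ d` vanishes in the limit. -/
theorem tendsto_integral_phase {n : ℕ} {M : Set (EuclideanSpace ℝ (Fin n))}
    (hM : MeasurableSet M) (f : EuclideanSpace ℝ (Fin n) → ℂ) {d : EuclideanSpace ℝ (Fin n)}
    (hd : d ≠ 0) {l : Filter ℝ} (hl : l ≤ cocompact ℝ) :
    Tendsto (fun lam : ℝ => ∫ x in M, phase lam x d * f x) l (nhds 0) := by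
  have h1 := tendsto_integral_exp_inner_smul_cocompact (V := EuclideanSpace ℝ (Fin n))
    (M.indicator f)
  have h2 : Tendsto (fun lam : ℝ => (lam / (2 * Real.pi)) • d) l
      (cocompact (EuclideanSpace ℝ (Fin n))) := by
    rw [← Metric.cobounded_eq_cocompact, ← tendsto_norm_atTop_iff_cobounded]
    have h3 : Tendsto (fun lam : ℝ => ‖lam‖) l atTop :=
      (tendsto_norm_cocompact_atTop (E := ℝ)).mono_left hl
    have h4 : 0 < ‖d‖ / (2 * Real.pi) := div_pos (norm_pos_iff.2 hd) (by positivity)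
    refine (h3.atTop_mul_const h4).congr fun lam => ?_
    rw [norm_smul, norm_div, Real.norm_of_nonneg (by positivity : (0 : ℝ) ≤ 2 * Real.pi)]
    ring
  refine (h1.comp h2).congr fun lam => ?_
  rw [← integral_indicator hM]
  refine integral_congr_ae (Eventually.of_forall fun x => ?_)
  by_cases hx : x ∈ M
  · simp only [Set.indicator_of_mem hx, Circle.smul_def, smul_eq_mul, Real.fourierChar_apply,
      phase, inner_smul_right]
    congr 2
    push_cast
    have : (Real.pi : ℂ) ≠ 0 := by exact_mod_cast Real.pi_ne_zero
    field_simp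
  · simp [Set.indicator_of_notMem hx]

theorem integrable_of_bounded {α : Type*} [MeasurableSpace α] {μ : Measure α}
    [IsFiniteMeasure μ] {f : α → ℂ} (hf : Measurable f) {C : ℝ} (hC : ∀ a, ‖f a‖ ≤ C) :
    Integrable f μ :=
  Integrable.of_bound hf.aestronglyMeasurable C (Eventually.of_forall hC)

/-- The `T T*` step: the squared `L²(M)` norm is a double integral over `S × S` of
Fourier transforms at frequency `λ (s - s')`. These tend to zero off the diagonal, and the
diagonal is null since the measure has no atoms. -/
theorem tendsto_integral_normSq {n : ℕ}
    {σ : Measure (sphere (0 : EuclideanSpace ℝ (Fin n)) 1)} [IsFiniteMeasure σ] [NullSingletonClass σ]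
    {M : Set (EuclideanSpace ℝ (Fin n))} (hM : MeasurableSet M) [IsFiniteMeasure (volume.restrict M)]
    (h : EuclideanSpace ℝ (Fin n) → sphere (0 : EuclideanSpace ℝ (Fin n)) 1 → ℂ)
    (hm : Measurable (Function.uncurry h)) {C : ℝ} (hC : ∀ x s, ‖h x s‖ ≤ C)
    {l : Filter ℝ} [l.IsCountablyGenerated] (hl : l ≤ cocompact ℝ) :
    Tendsto (fun lam : ℝ => ∫ x in M, ‖∫ s, phase lam x s * h x s ∂σ‖ ^ 2) l (nhds 0) := by
  -- the integrand of the double integral, after combining the two phases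
  let F : ℝ → EuclideanSpace ℝ (Fin n) → (sphere (0 : EuclideanSpace ℝ (Fin n)) 1 ×
      sphere (0 : EuclideanSpace ℝ (Fin n)) 1) → ℂ := fun lam x p =>
    phase lam x ((p.1 : EuclideanSpace ℝ (Fin n)) - p.2) *
      (h x p.1 * (starRingEnd ℂ) (h x p.2))
  have hFm : ∀ lam, Measurable (Function.uncurry (F lam)) := by
    intro lam
    have e1 : Measurable fun q : EuclideanSpace ℝ (Fin n) ×
        (sphere (0 : EuclideanSpace ℝ (Fin n)) 1 × sphere (0 : EuclideanSpace ℝ (Fin n)) 1) =>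
        phase lam q.1 ((q.2.1 : EuclideanSpace ℝ (Fin n)) - q.2.2) :=
      ((measurable_phase lam).comp (by fun_prop : Measurable fun q : EuclideanSpace ℝ (Fin n) ×
        (sphere (0 : EuclideanSpace ℝ (Fin n)) 1 × sphere (0 : EuclideanSpace ℝ (Fin n)) 1) =>
        (q.1, (q.2.1 : EuclideanSpace ℝ (Fin n)) - q.2.2)) :)
    have e2 : Measurable fun q : EuclideanSpace ℝ (Fin n) ×
        (sphere (0 : EuclideanSpace ℝ (Fin n)) 1 × sphere (0 : EuclideanSpace ℝ (Fin n)) 1) =>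
        h q.1 q.2.1 := (hm.comp (by fun_prop : Measurable fun q : EuclideanSpace ℝ (Fin n) ×
        (sphere (0 : EuclideanSpace ℝ (Fin n)) 1 × sphere (0 : EuclideanSpace ℝ (Fin n)) 1) =>
          (q.1, q.2.1)) :)
    have e3 : Measurable fun q : EuclideanSpace ℝ (Fin n) ×
        (sphere (0 : EuclideanSpace ℝ (Fin n)) 1 × sphere (0 : EuclideanSpace ℝ (Fin n)) 1) =>
        h q.1 q.2.2 := (hm.comp (by fun_prop : Measurable fun q : EuclideanSpace ℝ (Fin n) ×
        (sphere (0 : EuclideanSpace ℝ (Fin n)) 1 × sphere (0 : EuclideanSpace ℝ (Fin n)) 1) =>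
          (q.1, q.2.2)) :)
    exact e1.mul (e2.mul (Complex.continuous_conj.measurable.comp e3))
  have hFb : ∀ lam x p, ‖F lam x p‖ ≤ C * C := by
    intro lam x p
    simp only [F, norm_mul, norm_phase, one_mul, RCLike.norm_conj]
    exact mul_le_mul (hC _ _) (hC _ _) (norm_nonneg _) ((norm_nonneg _).trans (hC x p.1))
  have key : ∀ lam, ((∫ x in M, ‖∫ s, phase lam x s * h x s ∂σ‖ ^ 2 : ℝ) : ℂ) =
      ∫ p, (∫ x in M, F lam x p) ∂(σ.prod σ) := by
    intro lam
    rw [← integral_integral_swap (integrable_of_bounded (hFm lam) fun q => hFb lam q.1 q.2),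
      ← integral_complex_ofReal]
    refine integral_congr_ae (Eventually.of_forall fun x => ?_)
    have := integral_prod_mul (μ := σ) (ν := σ) (fun s => phase lam x s * h x s)
      (fun s => (starRingEnd ℂ) (phase lam x s * h x s))
    rw [integral_conj, Complex.mul_conj'] at this
    simp only
    push_cast
    rw [← this]
    refine integral_congr_ae (Eventually.of_forall fun p => ?_)
    simp only [F, ← phase_mul_conj, map_mul]
    ring
  have hdiag : ∀ᵐ p ∂(σ.prod σ), p.1 ≠ p.2 := by
    have hms : MeasurableSet {p : sphere (0 : EuclideanSpace ℝ (Fin n)) 1 ×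
      sphere (0 : EuclideanSpace ℝ (Fin n)) 1 | p.1 = p.2} :=
        measurableSet_eq_fun measurable_fst measurable_snd
    have h0 : (σ.prod σ) {p | p.1 = p.2} = 0 := by
      rw [Measure.measure_prod_null hms]
      refine Eventually.of_forall fun s => ?_
      have : Prod.mk s ⁻¹' {p : sphere (0 : EuclideanSpace ℝ (Fin n)) 1 ×
          sphere (0 : EuclideanSpace ℝ (Fin n)) 1 | p.1 = p.2} = {s} := by
        ext t; simp [eq_comm]
      simp only [this, measure_singleton, Pi.zero_apply]
    rw [ae_iff]
    simpa using h0
  have hlim : Tendsto (fun lam => ∫ p, (∫ x in M, F lam x p) ∂(σ.prod σ)) l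
      (nhds (∫ _p, (0 : ℂ) ∂(σ.prod σ))) := by
    refine tendsto_integral_filter_of_dominated_convergence
      (fun _ => C * C * (volume.restrict M).real Set.univ) ?_ ?_ (integrable_const _) ?_
    · refine Eventually.of_forall fun lam => ?_
      exact ((hFm lam).stronglyMeasurable.integral_prod_left).aestronglyMeasurable
    · refine Eventually.of_forall fun lam => Eventually.of_forall fun p => ?_
      exact norm_integral_le_of_norm_le_const (Eventually.of_forall fun x => hFb lam x p)
    · filter_upwards [hdiag] with p hp
      exact tendsto_integral_phase hM _ (sub_ne_zero.2 fun e => hp (Subtype.ext e)) hl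
  rw [integral_zero] at hlim
  have := (Complex.continuous_re.tendsto 0).comp hlim
  refine (this.congr fun lam => ?_)
  simp [← key lam]

/-- The extended-real form of `tendsto_integral_normSq`, as used for Tonelli. -/
theorem tendsto_lintegral_normSq {n : ℕ}
    {σ : Measure (sphere (0 : EuclideanSpace ℝ (Fin n)) 1)} [IsFiniteMeasure σ] [NullSingletonClass σ]
    {M : Set (EuclideanSpace ℝ (Fin n))} (hM : MeasurableSet M) [IsFiniteMeasure (volume.restrict M)]
    (h : EuclideanSpace ℝ (Fin n) → sphere (0 : EuclideanSpace ℝ (Fin n)) 1 → ℂ)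
    (hm : Measurable (Function.uncurry h)) {C : ℝ} (hC : ∀ x s, ‖h x s‖ ≤ C)
    {l : Filter ℝ} [l.IsCountablyGenerated] (hl : l ≤ cocompact ℝ) :
    Tendsto (fun lam : ℝ => ∫⁻ x in M, ‖∫ s, phase lam x s * h x s ∂σ‖ₑ ^ 2) l (nhds 0) := by
  have h1 := ENNReal.tendsto_ofReal (tendsto_integral_normSq (σ := σ) hM h hm hC hl)
  rw [ENNReal.ofReal_zero] at h1
  refine h1.congr fun lam => ?_
  have hmeas : StronglyMeasurable fun x => ∫ s, phase lam x s * h x s ∂σ := by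
    refine StronglyMeasurable.integral_prod_right' (f := fun q : EuclideanSpace ℝ (Fin n) ×
      sphere (0 : EuclideanSpace ℝ (Fin n)) 1 => phase lam q.1 q.2 * h q.1 q.2) ?_
    exact (((measurable_phase lam).comp (by fun_prop : Measurable fun q :
      EuclideanSpace ℝ (Fin n) × sphere (0 : EuclideanSpace ℝ (Fin n)) 1 =>
        (q.1, (q.2 : EuclideanSpace ℝ (Fin n))))).mul hm).stronglyMeasurable
  have hb : ∀ x, ‖∫ s, phase lam x s * h x s ∂σ‖ ≤ C * σ.real Set.univ := fun x =>
    norm_integral_le_of_norm_le_const (Eventually.of_forall fun s => by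
      simpa [norm_phase] using hC x s)
  rw [ofReal_integral_eq_lintegral_ofReal]
  · refine lintegral_congr fun x => ?_
    rw [ENNReal.ofReal_pow (norm_nonneg _), ofReal_norm]
  · refine Integrable.of_bound (hmeas.norm.pow 2).aestronglyMeasurable
      ((C * σ.real Set.univ) ^ 2) (Eventually.of_forall fun x => ?_)
    rw [Real.norm_of_nonneg (by positivity)]
    exact pow_le_pow_left₀ (norm_nonneg _) (hb x) 2
  · exact Eventually.of_forall fun x => by positivity

theorem measurable_oscK {n : ℕ}
    {Φ : ℝ → EuclideanSpace ℝ (Fin n) → sphere (0 : EuclideanSpace ℝ (Fin n)) 1 →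
      sphere (0 : EuclideanSpace ℝ (Fin n)) 1 → ℂ}
    (hΦm : Measurable fun q : ℝ × EuclideanSpace ℝ (Fin n) ×
      sphere (0 : EuclideanSpace ℝ (Fin n)) 1 × sphere (0 : EuclideanSpace ℝ (Fin n)) 1 =>
        Φ q.1 q.2.1 q.2.2.1 q.2.2.2) (lam : ℝ) :
    Measurable fun q : ℝ × EuclideanSpace ℝ (Fin n) ×
        sphere (0 : EuclideanSpace ℝ (Fin n)) 1 => oscK Φ lam q.1 q.2.1 q.2.2 := by
  have : IsFiniteMeasure (sphereMeasure n) := by unfold sphereMeasure; infer_instance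
  refine (StronglyMeasurable.integral_prod_right' (ν := sphereMeasure n)
    (f := fun q : (ℝ × EuclideanSpace ℝ (Fin n) × sphere (0 : EuclideanSpace ℝ (Fin n)) 1) ×
      sphere (0 : EuclideanSpace ℝ (Fin n)) 1 =>
        phase lam q.1.2.1 q.2 * Φ q.1.1 q.1.2.1 q.1.2.2 q.2) ?_).measurable
  refine Measurable.stronglyMeasurable (Measurable.mul ?_ ?_)
  · have hg : Measurable fun q :
        (ℝ × EuclideanSpace ℝ (Fin n) × sphere (0 : EuclideanSpace ℝ (Fin n)) 1) ×
        sphere (0 : EuclideanSpace ℝ (Fin n)) 1 =>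
          (q.1.2.1, (q.2 : EuclideanSpace ℝ (Fin n))) :=
      measurable_fst.snd.fst.prodMk (measurable_subtype_coe.comp measurable_snd)
    exact ((measurable_phase lam).comp hg :)
  · have hg : Measurable fun q :
        (ℝ × EuclideanSpace ℝ (Fin n) × sphere (0 : EuclideanSpace ℝ (Fin n)) 1) ×
        sphere (0 : EuclideanSpace ℝ (Fin n)) 1 => (q.1.1, q.1.2.1, q.1.2.2, q.2) :=
      measurable_fst.fst.prodMk (measurable_fst.snd.fst.prodMk
        (measurable_fst.snd.snd.prodMk measurable_snd))
    exact (hΦm.comp hg :)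

/-- Convergence for an everywhere bounded kernel: for fixed `(t, v)` the squared `L²(M)` norm
tends to zero, and dominated convergence in `v` and then in `t` concludes. -/
theorem tendsto_lintegral_oscK {n : ℕ} (hn : 2 ≤ n) {M : Set (EuclideanSpace ℝ (Fin n))}
    (hM : MeasurableSet M) [IsFiniteMeasure (volume.restrict M)]
    {τ : Measure ℝ} [IsFiniteMeasure τ]
    {Φ : ℝ → EuclideanSpace ℝ (Fin n) → sphere (0 : EuclideanSpace ℝ (Fin n)) 1 →
      sphere (0 : EuclideanSpace ℝ (Fin n)) 1 → ℂ}
    (hΦm : Measurable fun q : ℝ × EuclideanSpace ℝ (Fin n) ×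
      sphere (0 : EuclideanSpace ℝ (Fin n)) 1 × sphere (0 : EuclideanSpace ℝ (Fin n)) 1 =>
        Φ q.1 q.2.1 q.2.2.1 q.2.2.2)
    {C : ℝ} (hC : ∀ t x v s, ‖Φ t x v s‖ ≤ C)
    {l : Filter ℝ} [l.IsCountablyGenerated] (hl : l ≤ cocompact ℝ) :
    Tendsto (fun lam : ℝ => ∫⁻ t, ∫⁻ x in M, ∫⁻ v, ‖oscK Φ lam t x v‖ₑ ^ 2
      ∂(sphereMeasure n) ∂volume ∂τ) l (nhds 0) := by
  have : IsFiniteMeasure (sphereMeasure n) := by unfold sphereMeasure; infer_instance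
  have := sphereMeasure_noAtoms hn
  set σ := sphereMeasure n with hσ
  have hKm : ∀ lam, Measurable fun q : ℝ × EuclideanSpace ℝ (Fin n) ×
      sphere (0 : EuclideanSpace ℝ (Fin n)) 1 => ‖oscK Φ lam q.1 q.2.1 q.2.2‖ₑ ^ 2 :=
    fun lam => (measurable_oscK hΦm lam).enorm.pow_const 2
  have hKb : ∀ lam t x v, ‖oscK Φ lam t x v‖ₑ ^ 2 ≤ ENNReal.ofReal (C * σ.real Set.univ) ^ 2 := by
    intro lam t x v
    gcongr
    rw [← ofReal_norm]
    refine ENNReal.ofReal_le_ofReal ?_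
    refine norm_integral_le_of_norm_le_const (Eventually.of_forall fun s => ?_)
    have := norm_phase lam x (s : EuclideanSpace ℝ (Fin n))
    rw [phase] at this
    rw [norm_mul, this, one_mul]
    exact hC t x v s
  set B : ℝ≥0∞ := ENNReal.ofReal (C * σ.real Set.univ) ^ 2 with hB
  have hBtop : B ≠ ∞ := by simp [hB]
  have hx : ∀ lam t v, ∫⁻ x in M, ‖oscK Φ lam t x v‖ₑ ^ 2 ≤
      B * (volume.restrict M) Set.univ := by
    intro lam t v
    calc _ ≤ ∫⁻ x in M, B := lintegral_mono fun x => hKb lam t x v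
      _ = _ := by rw [lintegral_const]
  have hswap : ∀ lam t, ∫⁻ x in M, ∫⁻ v, ‖oscK Φ lam t x v‖ₑ ^ 2 ∂σ =
      ∫⁻ v, ∫⁻ x in M, ‖oscK Φ lam t x v‖ₑ ^ 2 ∂volume ∂σ := fun lam t =>
    lintegral_lintegral_swap ((hKm lam).comp (measurable_prodMk_left (x := t)) :).aemeasurable
  simp_rw [hswap]
  have hmeas1 : ∀ lam, Measurable fun p : ℝ × sphere (0 : EuclideanSpace ℝ (Fin n)) 1 =>
      ∫⁻ x in M, ‖oscK Φ lam p.1 x p.2‖ₑ ^ 2 := by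
    intro lam
    refine Measurable.lintegral_prod_right' (f := fun q :
      (ℝ × sphere (0 : EuclideanSpace ℝ (Fin n)) 1) × EuclideanSpace ℝ (Fin n) =>
      ‖oscK Φ lam q.1.1 q.2 q.1.2‖ₑ ^ 2) ?_
    have hg : Measurable fun q :
        (ℝ × sphere (0 : EuclideanSpace ℝ (Fin n)) 1) × EuclideanSpace ℝ (Fin n) =>
          (q.1.1, q.2, q.1.2) :=
      measurable_fst.fst.prodMk (measurable_snd.prodMk measurable_fst.snd)
    exact ((hKm lam).comp hg :)
  have hlim : ∀ t, Tendsto (fun lam => ∫⁻ v, ∫⁻ x in M, ‖oscK Φ lam t x v‖ₑ ^ 2 ∂volume ∂σ) l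
      (nhds (∫⁻ _v, 0 ∂σ)) := by
    intro t
    refine tendsto_lintegral_filter_of_dominated_convergence
      (fun _ => B * (volume.restrict M) Set.univ) ?_ ?_ ?_ ?_
    · exact Eventually.of_forall fun lam => ((hmeas1 lam).comp (measurable_prodMk_left (x := t)) :)
    · exact Eventually.of_forall fun lam => Eventually.of_forall fun v => hx lam t v
    · rw [lintegral_const]
      finiteness
    · refine Eventually.of_forall fun v => ?_
      refine tendsto_lintegral_normSq hM (fun x s => Φ t x v s) ?_ (fun x s => hC t x v s) hl
      exact (hΦm.comp (by fun_prop : Measurable fun q : EuclideanSpace ℝ (Fin n) ×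
        sphere (0 : EuclideanSpace ℝ (Fin n)) 1 => (t, q.1, v, q.2)) :)
  rw [← lintegral_zero (μ := τ)]
  refine tendsto_lintegral_filter_of_dominated_convergence
    (fun _ => B * (volume.restrict M) Set.univ * σ Set.univ) ?_ ?_ ?_ ?_
  · exact Eventually.of_forall fun lam => Measurable.lintegral_prod_right' (hmeas1 lam)
  · refine Eventually.of_forall fun lam => Eventually.of_forall fun t => ?_
    calc _ ≤ ∫⁻ v, B * (volume.restrict M) Set.univ ∂σ := lintegral_mono fun v => hx lam t v
      _ = _ := by rw [lintegral_const]
  · rw [lintegral_const]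
    finiteness
  · exact Eventually.of_forall fun t => by simpa using hlim t

/-- The theorem along any countably generated filter at infinity; it reduces to the everywhere
bounded case by setting `Φ` to zero wherever it exceeds its essential bound. -/
theorem tendsto_eLpNorm_oscK {n : ℕ} (hn : 2 ≤ n) {M : Set (EuclideanSpace ℝ (Fin n))}
    (hM : MeasurableSet M) [IsFiniteMeasure (volume.restrict M)]
    {τ : Measure ℝ} [IsFiniteMeasure τ]
    {Φ : ℝ → EuclideanSpace ℝ (Fin n) → sphere (0 : EuclideanSpace ℝ (Fin n)) 1 →
      sphere (0 : EuclideanSpace ℝ (Fin n)) 1 → ℂ}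
    (hΦm : Measurable fun q : ℝ × EuclideanSpace ℝ (Fin n) ×
      sphere (0 : EuclideanSpace ℝ (Fin n)) 1 × sphere (0 : EuclideanSpace ℝ (Fin n)) 1 =>
        Φ q.1 q.2.1 q.2.2.1 q.2.2.2)
    {C : ℝ} (hC : ∀ᵐ q ∂(τ.prod ((volume.restrict M).prod
        ((sphereMeasure n).prod (sphereMeasure n)))),
      ‖Φ q.1 q.2.1 q.2.2.1 q.2.2.2‖ ≤ C)
    {l : Filter ℝ} [l.IsCountablyGenerated] (hl : l ≤ cocompact ℝ) :
    Tendsto (fun lam : ℝ => eLpNorm (fun q : ℝ × EuclideanSpace ℝ (Fin n) ×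
        sphere (0 : EuclideanSpace ℝ (Fin n)) 1 => oscK Φ lam q.1 q.2.1 q.2.2) 2
        (τ.prod ((volume.restrict M).prod (sphereMeasure n)))) l (nhds 0) := by
  have : IsFiniteMeasure (sphereMeasure n) := by unfold sphereMeasure; infer_instance
  let Ψ : ℝ → EuclideanSpace ℝ (Fin n) → sphere (0 : EuclideanSpace ℝ (Fin n)) 1 →
      sphere (0 : EuclideanSpace ℝ (Fin n)) 1 → ℂ := fun t x v s =>
    {z : ℂ | ‖z‖ ≤ C}.indicator id (Φ t x v s)
  have hΨm : Measurable fun q : ℝ × EuclideanSpace ℝ (Fin n) ×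
      sphere (0 : EuclideanSpace ℝ (Fin n)) 1 × sphere (0 : EuclideanSpace ℝ (Fin n)) 1 =>
        Ψ q.1 q.2.1 q.2.2.1 q.2.2.2 :=
    (measurable_id.indicator (measurableSet_le measurable_norm measurable_const)).comp hΦm
  have hΨb : ∀ t x v s, ‖Ψ t x v s‖ ≤ max C 0 := by
    intro t x v s
    by_cases hz : Φ t x v s ∈ {z : ℂ | ‖z‖ ≤ C}
    · simp only [Ψ, Set.indicator_of_mem hz, id]
      exact le_max_of_le_left hz
    · simp [Ψ, Set.indicator_of_notMem hz]
  have h1 := tendsto_lintegral_oscK (τ := τ) hn hM hΨm hΨb hl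
  have h2 : ∀ lam, ∫⁻ t, ∫⁻ x in M, ∫⁻ v, ‖oscK Ψ lam t x v‖ₑ ^ 2
      ∂(sphereMeasure n) ∂volume ∂τ = ∫⁻ q, ‖oscK Φ lam q.1 q.2.1 q.2.2‖ₑ ^ 2
        ∂(τ.prod ((volume.restrict M).prod (sphereMeasure n))) := by
    intro lam
    have hKm : Measurable fun q : ℝ × EuclideanSpace ℝ (Fin n) ×
      sphere (0 : EuclideanSpace ℝ (Fin n)) 1 => ‖oscK Φ lam q.1 q.2.1 q.2.2‖ₑ ^ 2 :=
      (measurable_oscK hΦm lam).enorm.pow_const 2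
    rw [lintegral_prod _ hKm.aemeasurable]
    refine lintegral_congr_ae ?_
    filter_upwards [Measure.ae_ae_of_ae_prod hC] with t ht
    have hKt : Measurable fun q : EuclideanSpace ℝ (Fin n) ×
        sphere (0 : EuclideanSpace ℝ (Fin n)) 1 => ‖oscK Φ lam t q.1 q.2‖ₑ ^ 2 :=
      (hKm.comp (measurable_prodMk_left (x := t)) :)
    rw [lintegral_prod _ hKt.aemeasurable]
    refine lintegral_congr_ae ?_
    filter_upwards [Measure.ae_ae_of_ae_prod ht] with x hx
    refine lintegral_congr_ae ?_
    filter_upwards [Measure.ae_ae_of_ae_prod hx] with v hv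
    have : oscK Ψ lam t x v = oscK Φ lam t x v := by
      refine integral_congr_ae ?_
      filter_upwards [hv] with s hs
      simp only [Ψ]
      rw [Set.indicator_of_mem (by exact hs), id]
    rw [this]
  simp_rw [h2] at h1
  have h3 := (ENNReal.continuous_rpow_const (y := (1 / 2 : ℝ))).tendsto 0 |>.comp h1
  rw [ENNReal.zero_rpow_of_pos (by norm_num)] at h3
  refine h3.congr fun lam => ?_
  rw [eLpNorm_eq_lintegral_rpow_enorm_toReal (by norm_num) (by norm_num)]
  simp

/-- Let `M ⊆ ℝⁿ` (`n ≥ 2`) be bounded open, `T > 0`, and `Φ` measurable and essentially bounded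
on `(0,T) × M × S^{n-1} × S^{n-1}`.  Then `‖𝒦_λ‖_{L²((0,T) × M × S^{n-1})} → 0` as
`λ → +∞` and as `λ → −∞`. -/
theorem stmt_5 {n : ℕ} (hn : 2 ≤ n) (M : Set (EuclideanSpace ℝ (Fin n)))
    (hMb : Bornology.IsBounded M) (hMo : IsOpen M) (T : ℝ) (hT : 0 < T)
    (Φ : ℝ → EuclideanSpace ℝ (Fin n) → sphere (0 : EuclideanSpace ℝ (Fin n)) 1 →
      sphere (0 : EuclideanSpace ℝ (Fin n)) 1 → ℂ)
    (hΦm : Measurable fun q : ℝ × EuclideanSpace ℝ (Fin n) ×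
      sphere (0 : EuclideanSpace ℝ (Fin n)) 1 × sphere (0 : EuclideanSpace ℝ (Fin n)) 1 =>
        Φ q.1 q.2.1 q.2.2.1 q.2.2.2)
    (hΦb : ∃ C : ℝ, ∀ᵐ q ∂((volume.restrict (Set.Ioo 0 T)).prod ((volume.restrict M).prod
        ((sphereMeasure n).prod (sphereMeasure n)))),
      ‖Φ q.1 q.2.1 q.2.2.1 q.2.2.2‖ ≤ C) :
    Tendsto (fun lam : ℝ => eLpNorm (fun q : ℝ × EuclideanSpace ℝ (Fin n) ×
        sphere (0 : EuclideanSpace ℝ (Fin n)) 1 => oscK Φ lam q.1 q.2.1 q.2.2) 2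
        ((volume.restrict (Set.Ioo 0 T)).prod ((volume.restrict M).prod (sphereMeasure n))))
      atTop (nhds 0) ∧
    Tendsto (fun lam : ℝ => eLpNorm (fun q : ℝ × EuclideanSpace ℝ (Fin n) ×
        sphere (0 : EuclideanSpace ℝ (Fin n)) 1 => oscK Φ lam q.1 q.2.1 q.2.2) 2
        ((volume.restrict (Set.Ioo 0 T)).prod ((volume.restrict M).prod (sphereMeasure n))))
      atBot (nhds 0) := by
  obtain ⟨C, hC⟩ := hΦb
  have : IsFiniteMeasure (volume.restrict M) :=
    ⟨by rw [Measure.restrict_apply_univ]; exact hMb.measure_lt_top⟩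
  exact ⟨tendsto_eLpNorm_oscK hn hMo.measurableSet hΦm hC atTop_le_cocompact,
    tendsto_eLpNorm_oscK hn hMo.measurableSet hΦm hC atBot_le_cocompact⟩
end

section
/- Let M be a bounded open convex subset of ℝ^n (n ≥ 2), T > 0, and let W ∈ L^∞(M × S^{n-1}) be nonvanishing. Assume the weighted X-ray transform I_W is injective, i.e., for every S̃ ∈ L^∞(M), if I_W S̃(x,v) = 0 for almost every (x,v) ∈ M × S^{n-1} then S̃ = 0 almost everywhere. Let S ∈ L^∞(ℝ × M) vanish for t outside (0,T). If the weighted light ray transform L_W S(t,x,v) = 0 for almost every (t,x,v) ∈ ℝ × M × S^{n-1}, then S = 0 almost everywhere. -/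
/-!
The proof uses the moments `m_k(x) = ∫ t ^ k S(t, x) dt`. Integrating `t ^ k L_W S(t, x, v) = 0`
over `t` and straightening the light ray by `t ↦ t - s` (`moment_ray`) gives
`∫ (∫ (t - s) ^ k S(t, x + s v) dt) W(x + s v, v) ds = 0`, the outer integral being over the chord.
If `m_j = 0` almost everywhere in `M` for all `j < k`, then on almost every chord these moments
vanish almost everywhere (`ae_chord`), so by the binomial formula (`moment_shift`) the inner integral
is `m_k(x + s v)`. Hence `I_W m_k = 0`, and injectivity of `I_W` gives `m_k = 0`. By strong induction
all moments vanish, and since `S(·, x)` is bounded with support in `[0, T]`, Weierstrass approximation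
gives `S(·, x) = 0` (`ae_eq_zero_of_moments`).
-/

open MeasureTheory Metric

/-- Forward exit time of a set `M` from point `x` in direction `v`. -/
noncomputable def exitTime {n : ℕ} (M : Set (EuclideanSpace ℝ (Fin n)))
    (x v : EuclideanSpace ℝ (Fin n)) : ℝ :=
  sSup {s : ℝ | 0 ≤ s ∧ ∀ s' : ℝ, 0 ≤ s' → s' < s → x + s' • v ∈ M}

/-- Backward exit time: `τ₋(x,v) := τ(x,-v)`. -/
noncomputable def backExitTime {n : ℕ} (M : Set (EuclideanSpace ℝ (Fin n)))
    (x v : EuclideanSpace ℝ (Fin n)) : ℝ :=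
  exitTime M x (-v)

/-- The weighted light ray transform
`L_W S(t,x,v) := ∫_{−τ₋(x,v)}^{τ(x,v)} S(t+s, x+sv) W(x+sv, v) ds`. -/
noncomputable def lightRayW {n : ℕ} (M : Set (EuclideanSpace ℝ (Fin n)))
    (W : EuclideanSpace ℝ (Fin n) → EuclideanSpace ℝ (Fin n) → ℂ)
    (S : ℝ → EuclideanSpace ℝ (Fin n) → ℂ)
    (t : ℝ) (x v : EuclideanSpace ℝ (Fin n)) : ℂ :=
  ∫ s in (-(backExitTime M x v))..(exitTime M x v),
    S (t + s) (x + s • v) * W (x + s • v) v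

/-- The weighted X-ray transform
`I_W S̃(x,v) := ∫_{−τ₋(x,v)}^{τ(x,v)} S̃(x+sv) W(x+sv, v) ds`. -/
noncomputable def xrayW {n : ℕ} (M : Set (EuclideanSpace ℝ (Fin n)))
    (W : EuclideanSpace ℝ (Fin n) → EuclideanSpace ℝ (Fin n) → ℂ)
    (S : EuclideanSpace ℝ (Fin n) → ℂ) (x v : EuclideanSpace ℝ (Fin n)) : ℂ :=
  ∫ s in (-(backExitTime M x v))..(exitTime M x v), S (x + s • v) * W (x + s • v) v

/-! ### Moments of bounded functions with bounded support -/

/-- A bounded measurable function supported in a bounded interval is integrable against every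
continuous weight. -/
theorem integrable_smul_of_support {T C : ℝ} {f : ℝ → ℂ} {g : ℝ → ℝ} (hg : Continuous g)
    (hf : Measurable f) (hb : ∀ t, ‖f t‖ ≤ C) (hs : ∀ t ∉ Set.Ioo 0 T, f t = 0) :
    Integrable fun t => g t • f t := by
  obtain ⟨K, hK⟩ := isCompact_Icc.exists_bound_of_continuousOn (s := Set.Icc 0 T) hg.continuousOn
  have h : IntegrableOn (fun t => g t • f t) (Set.Icc 0 T) := by
    refine Measure.integrableOn_of_bounded (M := K * C) (by simp)
      (hg.measurable.smul hf).aestronglyMeasurable ?_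
    filter_upwards [ae_restrict_mem measurableSet_Icc] with t ht
    rw [norm_smul]
    exact mul_le_mul (hK t ht) (hb t) (norm_nonneg _) ((norm_nonneg _).trans (hK t ht))
  refine (integrableOn_iff_integrable_of_support_subset ?_).1 h
  intro t ht
  by_contra hc
  exact ht (by simp [hs t fun h => hc (Set.Ioo_subset_Icc_self h)])

/-- A bounded function with bounded support is determined by its moments: Weierstrass
approximation extends the orthogonality from monomials to continuous test functions. -/
theorem ae_eq_zero_of_moments {T C : ℝ} {f : ℝ → ℂ} (hT : 0 < T)
    (hf : Measurable f) (hb : ∀ t, ‖f t‖ ≤ C) (hs : ∀ t ∉ Set.Ioo 0 T, f t = 0)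
    (hm : ∀ k : ℕ, ∫ t, t ^ k • f t = 0) : ∀ᵐ t, f t = 0 := by
  have hC : 0 ≤ C := (norm_nonneg _).trans (hb 0)
  have hp : ∀ p : Polynomial ℝ, ∫ t, p.eval t • f t = 0 := by
    intro p
    have hint : ∀ i : ℕ, Integrable fun t : ℝ => (p.coeff i * t ^ i) • f t := fun i =>
      integrable_smul_of_support (by fun_prop) hf hb hs
    simp_rw [Polynomial.eval_eq_sum_range, Finset.sum_smul]
    rw [integral_finsetSum _ fun i _ => hint i]
    refine Finset.sum_eq_zero fun i _ => ?_
    simp_rw [mul_smul]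
    rw [integral_smul, hm i, smul_zero]
  refine ae_eq_zero_of_integral_contDiff_smul_eq_zero ?_ ?_
  · have := integrable_smul_of_support (g := fun _ => 1) continuous_const hf hb hs
    simpa using this.locallyIntegrable
  · intro g hg _
    have hgc : Continuous g := hg.continuous
    rw [← norm_le_zero_iff]
    refine le_of_forall_pos_le_add fun ε hε => ?_
    have hδ : 0 < ε / (C * T + 1) := by positivity
    obtain ⟨p, hpε⟩ := exists_polynomial_near_of_continuousOn 0 T g hgc.continuousOn _ hδ
    have hsub : ∫ t, g t • f t = ∫ t in Set.Icc 0 T, (g t - p.eval t) • f t := by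
      rw [setIntegral_eq_integral_of_forall_compl_eq_zero]
      · simp_rw [sub_smul]
        rw [integral_sub (integrable_smul_of_support hgc hf hb hs)
          (integrable_smul_of_support p.continuous hf hb hs), hp, sub_zero]
      · intro t ht
        rw [hs t fun h => ht (Set.Ioo_subset_Icc_self h), smul_zero]
    rw [hsub]
    have hbd : ‖∫ t in Set.Icc 0 T, (g t - p.eval t) • f t‖
        ≤ (ε / (C * T + 1) * C) * volume.real (Set.Icc 0 T) := by
      refine norm_setIntegral_le_of_norm_le_const (by simp) fun t ht => ?_
      rw [norm_smul]
      refine mul_le_mul ?_ (hb t) (norm_nonneg _) hδ.le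
      rw [Real.norm_eq_abs, abs_sub_comm]
      exact (hpε t ht).le
    refine hbd.trans ?_
    rw [Real.volume_real_Icc_of_le hT.le, zero_add, sub_zero]
    have : ε / (C * T + 1) * C * T = ε * (C * T / (C * T + 1)) := by ring
    rw [this]
    have h1 : C * T / (C * T + 1) ≤ 1 := by
      rw [div_le_one (by positivity)]; linarith
    nlinarith

/-! ### Chords -/

theorem exitTime_nonneg {n : ℕ} (M : Set (EuclideanSpace ℝ (Fin n)))
    (x v : EuclideanSpace ℝ (Fin n)) : 0 ≤ exitTime M x v :=
  Real.sSup_nonneg fun _ hs => hs.1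

theorem mem_of_lt_exitTime {n : ℕ} {M : Set (EuclideanSpace ℝ (Fin n))}
    {x v : EuclideanSpace ℝ (Fin n)} {s : ℝ} (h0 : 0 ≤ s) (hs : s < exitTime M x v) :
    x + s • v ∈ M := by
  obtain ⟨r, hr, hsr⟩ := exists_lt_of_lt_csSup
    (s := {s : ℝ | 0 ≤ s ∧ ∀ s' : ℝ, 0 ≤ s' → s' < s → x + s' • v ∈ M})
    ⟨0, le_rfl, fun s' h h' => absurd h h'.not_ge⟩ hs
  exact hr.2 s h0 hsr

/-- The interior of a chord lies in `M`; this holds by definition of the exit times. -/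
theorem mem_of_mem_chord {n : ℕ} {M : Set (EuclideanSpace ℝ (Fin n))}
    {x v : EuclideanSpace ℝ (Fin n)} {s : ℝ}
    (hs : s ∈ Set.Ioo (-(backExitTime M x v)) (exitTime M x v)) : x + s • v ∈ M := by
  rcases le_total 0 s with h | h
  · exact mem_of_lt_exitTime h hs.2
  · have := mem_of_lt_exitTime (M := M) (x := x) (v := -v) (s := -s) (by linarith)
      (by have := hs.1; unfold backExitTime at this; linarith)
    simpa using this

/-- A property valid almost everywhere in `M` is valid at almost every point of almost every
chord: for fixed `s` and `v` the map `x ↦ x + s • v` preserves Lebesgue measure. -/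
theorem ae_chord {n : ℕ} {M : Set (EuclideanSpace ℝ (Fin n))} (hM : MeasurableSet M)
    (σ : Measure (sphere (0 : EuclideanSpace ℝ (Fin n)) 1)) [SFinite σ]
    {P : EuclideanSpace ℝ (Fin n) → Prop} (hP : ∀ᵐ y ∂(volume.restrict M), P y) :
    ∀ᵐ p ∂((volume.restrict M).prod σ), ∀ᵐ s : ℝ,
      p.1 + s • (p.2 : EuclideanSpace ℝ (Fin n)) ∈ M →
        P (p.1 + s • (p.2 : EuclideanSpace ℝ (Fin n))) := by
  rw [ae_restrict_iff' hM] at hP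
  have hq : Measure.QuasiMeasurePreserving
      (fun q : (EuclideanSpace ℝ (Fin n) × sphere (0 : EuclideanSpace ℝ (Fin n)) 1) × ℝ =>
        q.1.1 + q.2 • (q.1.2 : EuclideanSpace ℝ (Fin n)))
      (((volume.restrict M).prod σ).prod volume) volume := by
    refine QuasiMeasurePreserving.prod_of_left (by fun_prop) (Filter.Eventually.of_forall fun s => ?_)
    refine QuasiMeasurePreserving.prod_of_left (by fun_prop) (Filter.Eventually.of_forall fun v => ?_)
    exact (measurePreserving_add_right (volume : Measure (EuclideanSpace ℝ (Fin n)))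
      (s • (v : EuclideanSpace ℝ (Fin n)))).quasiMeasurePreserving.mono_left
      Measure.absolutelyContinuous_restrict
  exact Measure.ae_ae_of_ae_prod (hq.ae hP)

/-! ### Moments of the transform along a ray -/

/-- The `k`-th moment in time of the transform along one ray, in terms of the `t`-moments of the
integrand; the substitution `t ↦ t - s` straightens the light ray. -/
theorem moment_ray {a b T C : ℝ} (hab : a ≤ b) {F : ℝ → ℝ → ℂ}
    (hF : Measurable fun p : ℝ × ℝ => F p.1 p.2) (hb : ∀ t s, ‖F t s‖ ≤ C)
    (hs : ∀ t ∉ Set.Ioo 0 T, ∀ s, F t s = 0) (k : ℕ) :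
    ∫ t : ℝ, t ^ k • ∫ s in a..b, F (t + s) s
      = ∫ s in a..b, ∫ t : ℝ, (t - s) ^ k • F t s := by
  have hC : 0 ≤ C := (norm_nonneg _).trans (hb 0 0)
  have hG : Measurable fun p : ℝ × ℝ => p.1 ^ k • F (p.1 + p.2) p.2 := by
    have : Measurable fun p : ℝ × ℝ => F (p.1 + p.2) p.2 :=
      hF.comp (f := fun p : ℝ × ℝ => (p.1 + p.2, p.2)) (by fun_prop)
    exact (by fun_prop : Measurable fun p : ℝ × ℝ => p.1 ^ k).smul this
  -- The integrand vanishes for `t` outside `[-b, T - a]`.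
  have hint : Integrable (fun p : ℝ × ℝ => p.1 ^ k • F (p.1 + p.2) p.2)
      (volume.prod (volume.restrict (Set.Ioc a b))) := by
    obtain ⟨K, hK⟩ := isCompact_Icc.exists_bound_of_continuousOn (s := Set.Icc (-b) (T - a))
      (f := fun t : ℝ => t ^ k) (by fun_prop)
    have h1 : Integrable (fun p : ℝ × ℝ => p.1 ^ k • F (p.1 + p.2) p.2)
        ((volume.restrict (Set.Icc (-b) (T - a))).prod (volume.restrict (Set.Ioc a b))) := by
      refine Integrable.of_bound hG.aestronglyMeasurable (K * C) ?_
      rw [Measure.prod_restrict]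
      filter_upwards [ae_restrict_mem (measurableSet_Icc.prod measurableSet_Ioc)] with p hp
      rw [norm_smul]
      exact mul_le_mul (hK _ hp.1) (hb _ _) (norm_nonneg _) ((norm_nonneg _).trans (hK _ hp.1))
    rw [Measure.prod_restrict] at h1
    have h2 := (integrable_indicator_iff (measurableSet_Icc.prod measurableSet_Ioc)).2 h1
    have h3 : (volume.prod (volume.restrict (Set.Ioc a b)) : Measure (ℝ × ℝ))
        = (volume.prod volume).restrict (Set.univ ×ˢ Set.Ioc a b) := by
      rw [← Measure.prod_restrict, Measure.restrict_univ]
    rw [h3]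
    refine (h2.integrableOn (s := Set.univ ×ˢ Set.Ioc a b)).congr_fun ?_
      (MeasurableSet.univ.prod measurableSet_Ioc)
    rintro ⟨t, s⟩ ⟨-, hts⟩
    by_cases ht : t ∈ Set.Icc (-b) (T - a)
    · exact Set.indicator_of_mem (s := Set.Icc (-b) (T - a) ×ˢ Set.Ioc a b) ⟨ht, hts⟩ _
    · rw [Set.indicator_of_notMem fun h => ht h.1]
      simp only
      rw [hs, smul_zero]
      rintro ⟨h4, h5⟩
      exact ht ⟨by linarith [hts.2], by linarith [hts.1]⟩
  calc ∫ t : ℝ, t ^ k • ∫ s in a..b, F (t + s) s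
      = ∫ t : ℝ, ∫ s in Set.Ioc a b, t ^ k • F (t + s) s := by
        congr 1; ext t
        rw [intervalIntegral.integral_of_le hab, integral_smul]
    _ = ∫ s in Set.Ioc a b, ∫ t : ℝ, t ^ k • F (t + s) s := integral_integral_swap hint
    _ = ∫ s in a..b, ∫ t : ℝ, (t - s) ^ k • F t s := by
        rw [intervalIntegral.integral_of_le hab]
        congr 1; ext s
        rw [← integral_add_right_eq_self (fun t => (t - s) ^ k • F t s) s]
        simp

/-- If the moments of order less than `k` vanish, the `k`-th moment does not depend on the
centre. -/
theorem moment_shift {T C : ℝ} {f : ℝ → ℂ} (hf : Measurable f) (hb : ∀ t, ‖f t‖ ≤ C)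
    (hs : ∀ t ∉ Set.Ioo 0 T, f t = 0) {k : ℕ} (hm : ∀ j < k, ∫ t, t ^ j • f t = 0) (s : ℝ) :
    ∫ t, (t - s) ^ k • f t = ∫ t, t ^ k • f t := by
  simp_rw [sub_eq_add_neg, add_pow, Finset.sum_smul]
  rw [integral_finsetSum _ fun i _ => integrable_smul_of_support (by fun_prop) hf hb hs,
    Finset.sum_range_succ, Finset.sum_eq_zero]
  · simp
  · intro j hj
    have : ∀ t : ℝ, (t ^ j * (-s) ^ (k - j) * (k.choose j : ℝ)) • f t
        = ((-s) ^ (k - j) * (k.choose j : ℝ)) • t ^ j • f t := fun t => by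
      rw [smul_smul]; congr 1; ring
    simp_rw [this]
    rw [integral_smul, hm j (Finset.mem_range.1 hj), smul_zero]

/-! ### Injectivity -/

/-- Injectivity of the weighted light ray transform: if `M ⊆ ℝⁿ` is bounded open convex
(`n ≥ 2`), `T > 0`, `W ∈ L^∞(M × S^{n-1})` is nonvanishing, and the weighted X-ray transform
`I_W` is injective on `L^∞(M)`, then for `S ∈ L^∞(ℝ × M)` vanishing for `t ∉ (0,T)`,
`L_W S = 0` a.e. on `ℝ × M × S^{n-1}` implies `S = 0` a.e. -/
theorem stmt_12 {n : ℕ} (hn : 2 ≤ n) (M : Set (EuclideanSpace ℝ (Fin n)))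
    (hMb : Bornology.IsBounded M) (hMo : IsOpen M) (hMc : Convex ℝ M)
    (T : ℝ) (hT : 0 < T)
    (W : EuclideanSpace ℝ (Fin n) → EuclideanSpace ℝ (Fin n) → ℂ)
    (hWm : Measurable fun p : EuclideanSpace ℝ (Fin n) × EuclideanSpace ℝ (Fin n) => W p.1 p.2)
    (hWb : ∃ C : ℝ, ∀ x v, ‖W x v‖ ≤ C)
    (hWnv : ∀ x ∈ M, ∀ v : EuclideanSpace ℝ (Fin n), ‖v‖ = 1 → W x v ≠ 0)
    (hInj : ∀ St : EuclideanSpace ℝ (Fin n) → ℂ, Measurable St →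
      (∃ C : ℝ, ∀ y, ‖St y‖ ≤ C) →
      (∀ᵐ p ∂((volume.restrict M).prod (sphereMeasure n)),
        xrayW M W St p.1 (p.2 : EuclideanSpace ℝ (Fin n)) = 0) →
      (∀ᵐ y ∂(volume.restrict M), St y = 0))
    (S : ℝ → EuclideanSpace ℝ (Fin n) → ℂ)
    (hSm : Measurable fun p : ℝ × EuclideanSpace ℝ (Fin n) => S p.1 p.2)
    (hSb : ∃ C : ℝ, ∀ t x, ‖S t x‖ ≤ C)
    (hSsupp : ∀ t : ℝ, t ∉ Set.Ioo 0 T → ∀ x, S t x = 0)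
    (hLray : ∀ᵐ q ∂(volume.prod ((volume.restrict M).prod (sphereMeasure n))),
      lightRayW M W S q.1 q.2.1 (q.2.2 : EuclideanSpace ℝ (Fin n)) = 0) :
    ∀ᵐ p ∂(volume.prod (volume.restrict M)), S p.1 p.2 = 0 := by
  obtain ⟨CW, hCW⟩ := hWb
  obtain ⟨CS, hCS⟩ := hSb
  have hCS0 : 0 ≤ CS := (norm_nonneg _).trans (hCS 0 0)
  have : IsFiniteMeasure (sphereMeasure n) := by unfold sphereMeasure; infer_instance
  have hSx : ∀ x, Measurable fun t => S t x := fun x =>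
    hSm.comp (f := fun t : ℝ => (t, x)) (by fun_prop)
  -- Fubini in the order that puts `t` innermost, so that rays can be fixed.
  have hray : ∀ᵐ p ∂((volume.restrict M).prod (sphereMeasure n)), ∀ᵐ t : ℝ,
      lightRayW M W S t p.1 (p.2 : EuclideanSpace ℝ (Fin n)) = 0 :=
    Measure.ae_ae_of_ae_prod (Measure.measurePreserving_swap.quasiMeasurePreserving.ae hLray)
  have key : ∀ k : ℕ, ∀ᵐ y ∂(volume.restrict M), ∫ t : ℝ, t ^ k • S t y = 0 := by
    intro k
    induction k using Nat.strong_induction_on with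
    | _ k ih =>
    apply hInj (fun y => ∫ t : ℝ, t ^ k • S t y)
    · have h1 : Measurable fun p : EuclideanSpace ℝ (Fin n) × ℝ => p.2 ^ k • S p.2 p.1 :=
        (by fun_prop : Measurable fun p : EuclideanSpace ℝ (Fin n) × ℝ => p.2 ^ k).smul
          (hSm.comp measurable_swap)
      exact h1.stronglyMeasurable.integral_prod_right.measurable
    · refine ⟨T ^ k * CS * volume.real (Set.Icc 0 T), fun y => ?_⟩
      rw [← setIntegral_eq_integral_of_forall_compl_eq_zero (s := Set.Icc 0 T)]
      · refine norm_setIntegral_le_of_norm_le_const (by simp) fun t ht => ?_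
        rw [norm_smul, norm_pow, Real.norm_of_nonneg ht.1]
        exact mul_le_mul (pow_le_pow_left₀ ht.1 ht.2 k) (hCS _ _) (norm_nonneg _)
          (by positivity)
      · intro t ht
        rw [hSsupp t fun h => ht (Set.Ioo_subset_Icc_self h), smul_zero]
    · have hlow : ∀ᵐ y ∂(volume.restrict M), ∀ j < k, ∫ t : ℝ, t ^ j • S t y = 0 := by
        simp only [ae_all_iff]
        exact ih
      filter_upwards [hray, ae_chord hMo.measurableSet (sphereMeasure n) hlow] with ⟨x, v⟩ h0 hch
      simp only at h0 hch ⊢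
      have hle : -(backExitTime M x (v : EuclideanSpace ℝ (Fin n))) ≤ exitTime M x v :=
        (neg_nonpos.2 (exitTime_nonneg M x _)).trans (exitTime_nonneg M x _)
      have hF : Measurable fun p : ℝ × ℝ =>
          S p.1 (x + p.2 • (v : EuclideanSpace ℝ (Fin n)))
            * W (x + p.2 • (v : EuclideanSpace ℝ (Fin n))) v :=
        (hSm.comp (f := fun p : ℝ × ℝ =>
            (p.1, x + p.2 • (v : EuclideanSpace ℝ (Fin n)))) (by fun_prop)).mul
          (hWm.comp (f := fun p : ℝ × ℝ =>
            (x + p.2 • (v : EuclideanSpace ℝ (Fin n)), (v : EuclideanSpace ℝ (Fin n))))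
            (by fun_prop))
      have hmom := moment_ray (T := T) (C := CS * CW) hle (F := fun t s =>
          S t (x + s • (v : EuclideanSpace ℝ (Fin n)))
            * W (x + s • (v : EuclideanSpace ℝ (Fin n))) v) hF
        (fun t s => by
          rw [norm_mul]
          exact mul_le_mul (hCS _ _) (hCW _ _) (norm_nonneg _) hCS0)
        (fun t ht s => by rw [hSsupp t ht, zero_mul]) k
      -- The `k`-th moment of `L_W S` along this ray is `I_W m_k`.
      have hzero : ∫ t : ℝ, t ^ k • lightRayW M W S t x (v : EuclideanSpace ℝ (Fin n)) = 0 := by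
        refine integral_eq_zero_of_ae ?_
        filter_upwards [h0] with t ht
        simp [ht]
      unfold lightRayW at hzero
      rw [hmom] at hzero
      rw [← hzero, xrayW, intervalIntegral.integral_of_le hle, intervalIntegral.integral_of_le hle,
        integral_Ioc_eq_integral_Ioo, integral_Ioc_eq_integral_Ioo]
      refine setIntegral_congr_ae measurableSet_Ioo ?_
      filter_upwards [hch] with s hs hmem
      simp_rw [← smul_mul_assoc]
      rw [integral_mul_const, moment_shift (hSx _) (fun t => hCS t _)
        (fun t ht => hSsupp t ht _) (hs (mem_of_mem_chord hmem))]
  have hx : ∀ᵐ y ∂(volume.restrict M), ∀ᵐ t : ℝ, S t y = 0 := by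
    filter_upwards [ae_all_iff.2 key] with y hy
    exact ae_eq_zero_of_moments hT (hSx y) (fun t => hCS t y) (fun t ht => hSsupp t ht y) hy
  have hset : MeasurableSet {q : EuclideanSpace ℝ (Fin n) × ℝ | S q.2 q.1 = 0} :=
    (hSm.comp measurable_swap) (measurableSet_singleton 0)
  have hprod : ∀ᵐ q ∂((volume.restrict M).prod (volume : Measure ℝ)), S q.2 q.1 = 0 :=
    (Measure.ae_prod_iff_ae_ae hset).2 hx
  exact Measure.measurePreserving_swap.quasiMeasurePreserving.ae hprod
end

section
/- Let M be a bounded open convex subset of ℝ^n (n ≥ 2). Assume that for every η ∈ ℝ the attenuated X-ray transform is s-injective for degree 1: whenever g₁ : cl(M) → ℂ^n and g₀ : cl(M) → ℂ are continuous and ∫_{−τ_-(x,v)}^{τ(x,v)} e^{iηs} (g₁(x+sv)·v + g₀(x+sv)) ds = 0 for all (x,v) ∈ M × S^{n-1}, there exists p ∈ C¹(cl(M); ℂ) with p = 0 on ∂M, g₁ = ∇p and g₀ = iηp. Let f₁ : ℝ × M → ℂ^n and f₀ : ℝ × M → ℂ be bounded measurable functions such that for a.e. t they extend continuously to cl(M)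 and ∫_ℝ sup_x (|f₁(t,x)| + |f₀(t,x)|) dt < ∞. If the light ray transform of the one-form f = f₁·dx + f₀·dt vanishes, i.e., ∫_{−τ_-(x,v)}^{τ(x,v)} (f₁(t+s, x+sv)·v + f₀(t+s, x+sv)) ds = 0 for almost every (t,x,v) ∈ ℝ × M × S^{n-1}, then there is a bounded function p : ℝ × cl(M) → ℂ vanishing on ℝ × ∂M such that f₁(t,·) = ∇_x p(t,·) for a.e. t and f₀ = ∂_t p in the distributional sense (that is, f = d̄^s p is an exact one-form on ℝ × M vanishing on the boundary). -/
/-!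
The Fourier transform in `t` turns the light ray transform of `f₁·dx + f₀·dt` into the X-ray
transform, with attenuation factor `e^{iηs}`, of the transformed fields `f̂₁(η,·)`, `f̂₀(η,·)`. By
Fubini (`ft_line`) this attenuated transform vanishes for almost every `(x, v)`; chord integrals of
continuous functions depend continuously on `(x, v)`, because a line through a point of the convex
set `M` meets `∂M` in a null set (`continuousAt_chord`), so it vanishes for all `(x, v)`
(`attenuated_eq_zero`). The s-injectivity hypothesis then gives, for each frequency `η`, a potential
`q η` vanishing on `∂M` with `f̂₁(η,·) = ∇(q η)` and `f̂₀(η,·) = iη (q η)` (`exists_potential`).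

No inversion of the Fourier transform `η ↦ q η` is needed. Fix `x₀ ∈ ∂M` and let `p(t,x)` be the
integral of `f₁(t,·)` along the segment from `x₀` to `x`, for `x ∈ M`, and `0` elsewhere. It is
bounded because `f₁` and `M` are. By Fubini and the fundamental theorem of calculus, the transform
of `p(·,x)` is `q η x - q η x₀ = q η x`. In the same way, the circulation of `f₁(t,·)` around a
triangle `x₀, x, y` is an integrable function of `t` with zero Fourier transform, hence zero for
almost every `t` (`ae_zero_of_ft`). Countably many triangles and continuity give a null set of `t`
independent of the triangle, and off it `∇p(t,·) = f₁(t,·)` (`hasFDerivAt_of_lineInt`). Finally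
`f̂₀ = iη p̂` says that `f₀ = ∂_t p` as distributions in `t` (`distrib_deriv_of_ft`), which follows
from the exchange formula `∫ û φ = ∫ u φ̂` applied to the inverse transform of a test function.
-/

open MeasureTheory Metric

namespace LightRay

open Filter Set Topology
open scoped FourierTransform ContDiff

/-! ### Fourier transform in time -/

/-- The Fourier transform `ĥ(η) = ∫ e^{-iηt} h(t) dt`, in the angular-frequency normalisation. -/
noncomputable def ft (h : ℝ → ℂ) (η : ℝ) : ℂ :=
  ∫ t : ℝ, Complex.exp (-(Complex.I * (η : ℂ) * (t : ℂ))) * h t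

lemma norm_phase (η t : ℝ) : ‖Complex.exp (-(Complex.I * (η : ℂ) * (t : ℂ)))‖ = 1 := by
  rw [Complex.norm_exp]; simp

lemma fourier_eq_ft (h : ℝ → ℂ) (ξ : ℝ) : 𝓕 h ξ = ft h (2 * Real.pi * ξ) := by
  rw [Real.fourier_real_eq_integral_exp_smul, ft]
  congr 1; ext t
  rw [smul_eq_mul]; congr 2; push_cast; ring

lemma integral_mul_fourier {u φ : ℝ → ℂ} (hu : Integrable u) (hφ : Integrable φ) :
    ∫ t, u t * 𝓕 φ t = ∫ ξ, 𝓕 u ξ * φ ξ := by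
  simpa using! (VectorFourier.integral_fourierIntegral_smul_eq_flip (L := innerₗ ℝ)
    Real.continuous_fourierChar continuous_inner hu hφ).symm

/-- If `ŵ(η) = iη û(η)` for integrable `u`, `w`, then `w` is the distributional derivative
of `u`. -/
lemma distrib_deriv_of_ft {u w : ℝ → ℂ} (hu : Integrable u) (hw : Integrable w)
    (h : ∀ η : ℝ, ft w η = Complex.I * (η : ℂ) * ft u η)
    {ψ : ℝ → ℂ} (hψ : ContDiff ℝ (⊤ : ℕ∞) ψ) (hψc : HasCompactSupport ψ) :
    (∫ t, w t * ψ t) = -∫ t, u t * deriv ψ t := by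
  set φ : SchwartzMap ℝ ℂ := 𝓕⁻ (hψc.toSchwartzMap hψ) with hφ
  have hφψ : 𝓕 (φ : ℝ → ℂ) = ψ := by
    rw [← SchwartzMap.fourier_coe, hφ, FourierTransform.fourier_fourierInv_eq]
    rfl
  have hxφ : Integrable (fun x : ℝ => x • φ x) := by
    refine (φ.integrable_pow_mul volume 1).mono' ?_ (Eventually.of_forall fun x => ?_)
    · exact (continuous_id.smul φ.continuous).aestronglyMeasurable
    · simp
  have hd : deriv ψ = 𝓕 (fun x : ℝ => (-2 * Real.pi * Complex.I * x) • φ x) := by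
    rw [← hφψ, Real.deriv_fourier φ.integrable hxφ]
  have hi2 : Integrable (fun x : ℝ => (-2 * Real.pi * Complex.I * x) • φ x) := by
    have := hxφ.const_mul (-2 * Real.pi * Complex.I)
    refine this.congr (Eventually.of_forall fun x => ?_)
    simp only [smul_eq_mul, Complex.real_smul]; ring
  rw [hd, integral_mul_fourier hu hi2, ← hφψ, integral_mul_fourier hw φ.integrable,
    ← integral_neg]
  congr 1; ext ξ
  rw [fourier_eq_ft, fourier_eq_ft, h, smul_eq_mul]
  push_cast; ring

lemma ae_zero_of_ft {w : ℝ → ℂ} (hw : Integrable w) (h : ∀ η, ft w η = 0) :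
    ∀ᵐ t, w t = 0 := by
  refine ae_eq_zero_of_integral_contDiff_smul_eq_zero hw.locallyIntegrable fun g hg hgc => ?_
  have := distrib_deriv_of_ft (u := fun _ => 0) (integrable_zero _ _ _) hw
    (fun η => by rw [h]; simp [ft]) (ψ := fun t => (g t : ℂ))
    (Complex.ofRealCLM.contDiff.comp hg) (hgc.comp_left Complex.ofReal_zero)
  simp only [zero_mul, integral_zero, neg_zero] at this
  rw [← this]
  congr 1; ext t; rw [Complex.real_smul, mul_comm]

/-- Uniform slice bounds make a measurable kernel integrable over `ℝ × A`, `A` of finite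
measure. -/
lemma integrable_prod_of_slices {h : ℝ → ℝ → ℂ} (hm : Measurable fun q : ℝ × ℝ => h q.1 q.2)
    {A : Set ℝ} (hA : MeasurableSet A) (hAf : volume A < ⊤) {K : ℝ}
    (hs : ∀ s ∈ A, Integrable (fun t => h t s) ∧ ∫ t, ‖h t s‖ ≤ K) :
    Integrable (Function.uncurry h) ((volume : Measure ℝ).prod (volume.restrict A)) := by
  have : IsFiniteMeasure (volume.restrict A) := ⟨by simpa using hAf⟩
  have hm' : AEStronglyMeasurable (Function.uncurry h)
      ((volume : Measure ℝ).prod (volume.restrict A)) :=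
    Measurable.aestronglyMeasurable hm
  rw [integrable_prod_iff' hm']
  refine ⟨(ae_restrict_iff' hA).2 (Eventually.of_forall fun s hs' => (hs s hs').1), ?_⟩
  refine Integrable.mono' (integrable_const K) (hm'.norm.prod_swap.integral_prod_right') ?_
  refine (ae_restrict_iff' hA).2 (Eventually.of_forall fun s hs' => ?_)
  rw [Real.norm_of_nonneg (integral_nonneg fun _ => norm_nonneg _)]
  exact (hs s hs').2

lemma ft_integral {h : ℝ → ℝ → ℂ} (hm : Measurable fun q : ℝ × ℝ => h q.1 q.2)
    {A : Set ℝ} (hA : MeasurableSet A) (hAf : volume A < ⊤) {K : ℝ}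
    (hs : ∀ s ∈ A, Integrable (fun t => h t s) ∧ ∫ t, ‖h t s‖ ≤ K) :
    Integrable (fun t => ∫ s in A, h t s) ∧
    ∀ η, ft (fun t => ∫ s in A, h t s) η = ∫ s in A, ft (fun t => h t s) η := by
  refine ⟨(integrable_prod_of_slices hm hA hAf hs).integral_prod_left, fun η => ?_⟩
  unfold ft
  have hpm : Measurable fun q : ℝ × ℝ =>
      Complex.exp (-(Complex.I * (η : ℂ) * (q.1 : ℂ))) * h q.1 q.2 :=
    (by fun_prop : Measurable fun q : ℝ × ℝ =>
      Complex.exp (-(Complex.I * (η : ℂ) * (q.1 : ℂ)))).mul hm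
  rw [← integral_integral_swap (integrable_prod_of_slices
    (h := fun t s => Complex.exp (-(Complex.I * (η : ℂ) * (t : ℂ))) * h t s) hpm hA hAf (K := K)
    fun s hs' => ⟨?_, ?_⟩)]
  · congr 1; ext t; rw [integral_const_mul]
  · refine (hs s hs').1.norm.mono' ?_ (Eventually.of_forall fun t => ?_)
    · exact (hpm.comp (measurable_id.prodMk measurable_const)).aestronglyMeasurable
    · rw [norm_mul, norm_phase, one_mul]
  · refine le_of_eq_of_le ?_ (hs s hs').2
    congr 1; ext t; rw [norm_mul, norm_phase, one_mul]

lemma ft_shift (h : ℝ → ℂ) (η s : ℝ) :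
    ft (fun t => h (t + s)) η = Complex.exp (Complex.I * (η : ℂ) * (s : ℂ)) * ft h η := by
  unfold ft
  rw [← integral_const_mul, ← integral_add_right_eq_self
    (fun t : ℝ => Complex.exp (Complex.I * (η : ℂ) * (s : ℂ)) *
      (Complex.exp (-(Complex.I * (η : ℂ) * (t : ℂ))) * h t)) s]
  congr 1; ext t
  rw [← mul_assoc, ← Complex.exp_add]
  congr 2; push_cast; ring

/-! ### Exit times and chords -/

section Exit
variable {n : ℕ} {M : Set (EuclideanSpace ℝ (Fin n))}

lemma exitTime_bdd (hMb : Bornology.IsBounded M) {x v : EuclideanSpace ℝ (Fin n)}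
    (hv : ‖v‖ = 1) :
    BddAbove {s : ℝ | 0 ≤ s ∧ ∀ s' : ℝ, 0 ≤ s' → s' < s → x + s' • v ∈ M} := by
  obtain ⟨R, hR0, hR⟩ := hMb.exists_pos_norm_le
  refine ⟨R + ‖x‖, fun s ⟨h0, hs⟩ => ?_⟩
  by_contra! hlt
  have hx := norm_nonneg x
  have h1 := hR _ (hs ((s + (R + ‖x‖)) / 2) (by positivity) (by linarith))
  have h2 : ‖((s + (R + ‖x‖)) / 2) • v‖ = (s + (R + ‖x‖)) / 2 := by
    rw [norm_smul, hv, mul_one, Real.norm_of_nonneg (by positivity)]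
  have h3 := norm_sub_le (x + ((s + (R + ‖x‖)) / 2) • v) x
  rw [add_sub_cancel_left] at h3
  linarith

lemma mem_iff_lt_exitTime (hMb : Bornology.IsBounded M) (hMo : IsOpen M) (hMc : Convex ℝ M)
    {x v : EuclideanSpace ℝ (Fin n)} (hx : x ∈ M) (hv : ‖v‖ = 1) {s : ℝ} (hs : 0 ≤ s) :
    x + s • v ∈ M ↔ s < exitTime M x v := by
  constructor
  · intro h
    have ho : IsOpen {r : ℝ | x + r • v ∈ M} := hMo.preimage (by fun_prop)
    obtain ⟨ε, hε, hball⟩ := Metric.isOpen_iff.1 ho s h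
    have hmem : s + ε / 2 ∈ {s : ℝ | 0 ≤ s ∧ ∀ s' : ℝ, 0 ≤ s' → s' < s → x + s' • v ∈ M} := by
      refine ⟨by positivity, fun s' h0 h1 => ?_⟩
      rcases le_or_gt s s' with hss | hss
      · exact hball (by rw [Metric.mem_ball, Real.dist_eq, abs_lt]; constructor <;> linarith)
      · have hs0 : 0 < s := h0.trans_lt hss
        have := hMc.add_smul_mem hx h (t := s' / s) ⟨by positivity, (div_le_one hs0).2 hss.le⟩
        rwa [smul_smul, div_mul_cancel₀ _ hs0.ne'] at this
    have := le_csSup (exitTime_bdd hMb hv) hmem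
    unfold exitTime; linarith
  · intro h
    obtain ⟨r, ⟨_, hr⟩, hsr⟩ := exists_lt_of_lt_csSup
      (s := {s : ℝ | 0 ≤ s ∧ ∀ s' : ℝ, 0 ≤ s' → s' < s → x + s' • v ∈ M})
      ⟨0, le_rfl, fun s' h0 h1 => absurd h1 h0.not_gt⟩ h
    exact hr s hs hsr

/-- The chord of `M` through `x` in direction `v`, as a set of parameters. -/
lemma chord_eq (hMb : Bornology.IsBounded M) (hMo : IsOpen M) (hMc : Convex ℝ M)
    {x v : EuclideanSpace ℝ (Fin n)} (hx : x ∈ M) (hv : ‖v‖ = 1) :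
    {s : ℝ | x + s • v ∈ M} = Ioo (-(backExitTime M x v)) (exitTime M x v) := by
  have hf := mem_iff_lt_exitTime hMb hMo hMc hx hv (le_refl 0)
  have hb := mem_iff_lt_exitTime hMb hMo hMc hx (v := -v) (by simpa) (le_refl 0)
  simp only [zero_smul, add_zero, hx, true_iff] at hf hb
  ext s
  simp only [mem_ofPred_eq, mem_Ioo, backExitTime]
  rcases le_total 0 s with hs | hs
  · rw [mem_iff_lt_exitTime hMb hMo hMc hx hv hs]
    exact ⟨fun h => ⟨by linarith, h⟩, fun h => h.2⟩
  · have := mem_iff_lt_exitTime hMb hMo hMc hx (v := -v) (by simpa) (neg_nonneg.2 hs)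
    rw [smul_neg, neg_smul, neg_neg] at this
    rw [this]
    exact ⟨fun h => ⟨by linarith, by linarith⟩, fun h => by linarith⟩

lemma integral_chord (hMb : Bornology.IsBounded M) (hMo : IsOpen M) (hMc : Convex ℝ M)
    {x v : EuclideanSpace ℝ (Fin n)} (hx : x ∈ M) (hv : ‖v‖ = 1) (h : ℝ → ℂ) :
    ∫ s in (-(backExitTime M x v))..(exitTime M x v), h s =
      ∫ s in {s : ℝ | x + s • v ∈ M}, h s := by
  have h0 : (0 : ℝ) ∈ {s : ℝ | x + s • v ∈ M} := by simpa using hx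
  rw [chord_eq hMb hMo hMc hx hv] at h0 ⊢
  rw [intervalIntegral.integral_of_le (h0.1.trans h0.2).le, integral_Ioc_eq_integral_Ioo]

end Exit

/-! ### Continuity of chord integrals -/

section Chord
variable {n : ℕ} {M : Set (EuclideanSpace ℝ (Fin n))}

/-- A line through a point of the open convex set `M` meets `∂M` in a null set of parameters. -/
lemma ae_notMem_frontier (hMb : Bornology.IsBounded M) (hMo : IsOpen M) (hMc : Convex ℝ M)
    {x v : EuclideanSpace ℝ (Fin n)} (hx : x ∈ M) (hv : ‖v‖ = 1) :
    ∀ᵐ s : ℝ, x + s • v ∉ frontier M := by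
  have hce := chord_eq hMb hMo hMc hx hv
  have h0 : (0 : ℝ) ∈ {s : ℝ | x + s • v ∈ M} := by simpa using hx
  -- by convexity, a parameter `e` strictly between `0` and a parameter of `cl M` is a parameter of
  -- `M`; this cannot hold for the two endpoints of the chord
  have key : ∀ s e : ℝ, x + s • v ∈ closure M → 0 ≤ e / s → e / s < 1 → s ≠ 0 →
      e ∈ {s : ℝ | x + s • v ∈ M} := by
    intro s e hs h1 h2 h3
    have := hMc.combo_interior_closure_mem_interior (x := x) (by rwa [hMo.interior_eq]) hs
      (sub_pos.2 h2) h1 (by ring)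
    rw [hMo.interior_eq] at this
    have he : (1 - e / s) • x + (e / s) • (x + s • v) = x + e • v := by
      rw [smul_add, smul_smul, div_mul_cancel₀ _ h3, sub_smul, one_smul]; abel
    rwa [he] at this
  rw [hce] at h0 key
  have hfin : ({-(backExitTime M x v), exitTime M x v} : Set ℝ).Finite := by simp
  refine measure_mono_null ?_ (hfin.measure_zero volume)
  intro s hs
  have hs : x + s • v ∈ frontier M := by simpa using hs
  rw [hMo.frontier_eq] at hs
  have hns : s ∉ Ioo (-(backExitTime M x v)) (exitTime M x v) := by
    rw [← hce]; exact hs.2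
  by_contra hne
  simp only [mem_insert_iff, mem_singleton_iff, not_or] at hne
  rcases lt_or_gt_of_ne hne.1 with h | h
  · have hs0 : s < 0 := h.trans h0.1
    have := key s (-(backExitTime M x v)) hs.1 (div_nonneg_of_nonpos h0.1.le hs0.le)
      ((div_lt_one_of_neg hs0).2 h) hs0.ne
    exact lt_irrefl _ this.1
  · rcases lt_or_gt_of_ne hne.2 with h' | h'
    · exact hns ⟨h, h'⟩
    · have hs0 : 0 < s := h0.2.trans h'
      have := key s (exitTime M x v) hs.1 (div_nonneg h0.2.le hs0.le)
        ((div_lt_one hs0).2 h') hs0.ne'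
      exact lt_irrefl _ this.2

/-- Chord integrals depend continuously on the base point and the direction: the indicator of
`M` along the line converges off the null set where the line meets `∂M`. -/
lemma continuousAt_chord (hMb : Bornology.IsBounded M) (hMo : IsOpen M) (hMc : Convex ℝ M)
    {k : ℝ → EuclideanSpace ℝ (Fin n) → EuclideanSpace ℝ (Fin n) → ℂ}
    (hk : ContinuousOn (fun q : ℝ × EuclideanSpace ℝ (Fin n) × EuclideanSpace ℝ (Fin n) =>
      k q.1 q.2.1 q.2.2) {q | q.2.1 ∈ M})
    {K : ℝ} (hK : ∀ s, ∀ y ∈ M, ∀ v, ‖v‖ = 1 → ‖k s y v‖ ≤ K)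
    {x : EuclideanSpace ℝ (Fin n)} (hx : x ∈ M)
    (v : sphere (0 : EuclideanSpace ℝ (Fin n)) 1) :
    ContinuousAt (fun q : EuclideanSpace ℝ (Fin n) × sphere (0 : EuclideanSpace ℝ (Fin n)) 1 =>
      ∫ s in {s : ℝ | q.1 + s • (q.2 : EuclideanSpace ℝ (Fin n)) ∈ M},
        k s (q.1 + s • (q.2 : EuclideanSpace ℝ (Fin n))) q.2) (x, v) := by
  have hopen : ∀ a w : EuclideanSpace ℝ (Fin n), IsOpen {s : ℝ | a + s • w ∈ M} :=
    fun a w => hMo.preimage (by fun_prop)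
  have hset : IsOpen {q : ℝ × EuclideanSpace ℝ (Fin n) × EuclideanSpace ℝ (Fin n) | q.2.1 ∈ M} :=
    hMo.preimage (by fun_prop)
  simp_rw [← integral_indicator (hopen _ _).measurableSet]
  obtain ⟨R, hR0, hR⟩ := hMb.exists_pos_norm_le
  have hev : ∀ᶠ q : EuclideanSpace ℝ (Fin n) × sphere (0 : EuclideanSpace ℝ (Fin n)) 1
      in 𝓝 (x, v), q.1 ∈ M :=
    (continuous_fst.tendsto (x, v)).eventually (hMo.mem_nhds hx)
  have hKn : 0 ≤ K := (norm_nonneg _).trans (hK 0 x hx v (by simp))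
  refine continuousAt_of_dominated (bound := (Icc (-(2 * R)) (2 * R)).indicator fun _ => K)
    (Eventually.of_forall fun q => ?_) (hev.mono fun q hq => Eventually.of_forall fun s => ?_)
    ?_ ?_
  · refine (aestronglyMeasurable_indicator_iff (hopen _ _).measurableSet).2
      (ContinuousOn.aestronglyMeasurable ?_ (hopen _ _).measurableSet)
    exact hk.comp (f := fun s : ℝ => (s, q.1 + s • (q.2 : EuclideanSpace ℝ (Fin n)),
      (q.2 : EuclideanSpace ℝ (Fin n)))) (by fun_prop) (fun s hs => hs)
  · by_cases hs : s ∈ {s : ℝ | q.1 + s • (q.2 : EuclideanSpace ℝ (Fin n)) ∈ M}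
    · have hq2 : ‖(q.2 : EuclideanSpace ℝ (Fin n))‖ = 1 := by simp
      have h1 := hR _ hs
      have h2 := hR _ hq
      have h3 := norm_sub_le (q.1 + s • (q.2 : EuclideanSpace ℝ (Fin n))) q.1
      rw [add_sub_cancel_left, norm_smul, hq2, mul_one, Real.norm_eq_abs] at h3
      rw [indicator_of_mem hs, indicator_of_mem (s := Icc (-(2 * R)) (2 * R)) (abs_le.1 (by linarith))]
      exact hK _ _ hs _ hq2
    · rw [indicator_of_notMem hs, norm_zero]
      exact indicator_nonneg (fun _ _ => hKn) _
  · exact (integrable_indicator_iff measurableSet_Icc).2 (integrableOn_const (by simp))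
  · filter_upwards [ae_notMem_frontier hMb hMo hMc hx (v := v) (by simp)] with s hs
    have hc : Continuous fun q : EuclideanSpace ℝ (Fin n) ×
        sphere (0 : EuclideanSpace ℝ (Fin n)) 1 =>
        q.1 + s • (q.2 : EuclideanSpace ℝ (Fin n)) := by fun_prop
    by_cases hm : x + s • (v : EuclideanSpace ℝ (Fin n)) ∈ M
    · have hcc : ContinuousAt (fun q : EuclideanSpace ℝ (Fin n) ×
          sphere (0 : EuclideanSpace ℝ (Fin n)) 1 =>
          k s (q.1 + s • (q.2 : EuclideanSpace ℝ (Fin n))) q.2) (x, v) :=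
        ContinuousAt.comp (f := fun q : EuclideanSpace ℝ (Fin n) ×
          sphere (0 : EuclideanSpace ℝ (Fin n)) 1 =>
            (s, q.1 + s • (q.2 : EuclideanSpace ℝ (Fin n)), (q.2 : EuclideanSpace ℝ (Fin n))))
          (g := fun q : ℝ × EuclideanSpace ℝ (Fin n) × EuclideanSpace ℝ (Fin n) =>
            k q.1 q.2.1 q.2.2) (hk.continuousAt (hset.mem_nhds (by exact hm))) (by fun_prop)
      refine hcc.congr ?_
      filter_upwards [(hc.tendsto (x, v)).eventually (hMo.mem_nhds hm)] with q hq
      have hq' : s ∈ {s : ℝ | q.1 + s • (q.2 : EuclideanSpace ℝ (Fin n)) ∈ M} := hq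
      simp only [indicator_of_mem hq']
    · have hcl : x + s • (v : EuclideanSpace ℝ (Fin n)) ∈ (closure M)ᶜ := fun h => hs (by
        rw [hMo.frontier_eq]; exact ⟨h, hm⟩)
      refine (continuousAt_const (y := (0 : ℂ))).congr ?_
      filter_upwards [(hc.tendsto (x, v)).eventually
        (isClosed_closure.isOpen_compl.mem_nhds hcl)] with q hq
      have hq' : s ∉ {s : ℝ | q.1 + s • (q.2 : EuclideanSpace ℝ (Fin n)) ∈ M} :=
        fun h => hq (subset_closure h)
      simp only [indicator_of_notMem hq']

instance : IsFiniteMeasure (sphereMeasure n) := by unfold sphereMeasure; infer_instance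

instance : (sphereMeasure n).IsOpenPosMeasure := by unfold sphereMeasure; infer_instance

/-- `dx × sphereMeasure` charges every nonempty open subset of `M × S^{n-1}`, so an almost
everywhere vanishing function vanishes at each of its continuity points there. -/
lemma eq_zero_of_ae_of_continuousAt (hMo : IsOpen M)
    {J : EuclideanSpace ℝ (Fin n) × sphere (0 : EuclideanSpace ℝ (Fin n)) 1 → ℂ}
    (hJ : ∀ᵐ q ∂((volume.restrict M).prod (sphereMeasure n)), J q = 0)
    {x : EuclideanSpace ℝ (Fin n)} (hx : x ∈ M) (v : sphere (0 : EuclideanSpace ℝ (Fin n)) 1)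
    (hc : ContinuousAt J (x, v)) : J (x, v) = 0 := by
  by_contra hne
  have h1 : ∀ᶠ q in 𝓝 (x, v), J q ≠ 0 ∧ q.1 ∈ M :=
    (hc.eventually_ne hne).and ((continuous_fst.tendsto (x, v)).eventually (hMo.mem_nhds hx))
  obtain ⟨U, V, hU, hxU, hV, hvV, hUV⟩ := mem_nhds_prod_iff'.1 h1
  have hUM : U ⊆ M := fun y hy => (hUV (mk_mem_prod hy hvV)).2
  have h2 : ((volume.restrict M).prod (sphereMeasure n)) (U ×ˢ V) = 0 :=
    measure_mono_null (fun q hq => (hUV hq).1) hJ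
  rw [Measure.prod_prod, Measure.restrict_apply hU.measurableSet,
    inter_eq_self_of_subset_left hUM, mul_eq_zero] at h2
  rcases h2 with h2 | h2
  · exact hU.measure_ne_zero volume ⟨x, hxU⟩ h2
  · exact hV.measure_ne_zero _ ⟨v, hvV⟩ h2

end Chord

/-! ### Fourier transform of time-dependent functions and Fubini along lines -/

section Adm
variable {n : ℕ} {M : Set (EuclideanSpace ℝ (Fin n))}

/-- Time-dependent functions on `cl M` to which the Fourier transform in `t` applies: jointly
measurable, continuous on `cl M` for almost every `t`, with an integrable majorant. -/
def Admissible (M : Set (EuclideanSpace ℝ (Fin n)))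
    (h : ℝ → EuclideanSpace ℝ (Fin n) → ℂ) : Prop :=
  (Measurable fun q : ℝ × EuclideanSpace ℝ (Fin n) => h q.1 q.2) ∧
  (∀ᵐ t : ℝ, ContinuousOn (h t) (closure M)) ∧
  ∃ g : ℝ → ℝ, Integrable g ∧ ∀ᵐ t : ℝ, ∀ x ∈ closure M, ‖h t x‖ ≤ g t

/-- A majorant on `M` extends to `cl M` at every time `t` at which `h t` is continuous there. -/
lemma Admissible.of_le {h : ℝ → EuclideanSpace ℝ (Fin n) → ℂ}
    (hm : Measurable fun q : ℝ × EuclideanSpace ℝ (Fin n) => h q.1 q.2)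
    (hc : ∀ᵐ t : ℝ, ContinuousOn (h t) (closure M)) {g : ℝ → ℝ} (hg : Integrable g)
    (hb : ∀ t, ∀ x ∈ M, ‖h t x‖ ≤ g t) : Admissible M h := by
  refine ⟨hm, hc, g, hg, hc.mono fun t ht x hx => ?_⟩
  exact ContinuousWithinAt.closure_le hx ((ht x hx).norm.mono subset_closure)
    continuousWithinAt_const fun y hy => hb t y hy

lemma Admissible.add {h k : ℝ → EuclideanSpace ℝ (Fin n) → ℂ} (hh : Admissible M h)
    (hk : Admissible M k) : Admissible M (fun t x => h t x + k t x) := by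
  obtain ⟨g, hg, hgb⟩ := hh.2.2
  obtain ⟨g', hg', hgb'⟩ := hk.2.2
  refine ⟨hh.1.add hk.1, ?_, g + g', hg.add hg', ?_⟩
  · filter_upwards [hh.2.1, hk.2.1] with t h1 h2 using h1.add h2
  · filter_upwards [hgb, hgb'] with t h1 h2 x hx
    exact (norm_add_le _ _).trans (add_le_add (h1 x hx) (h2 x hx))

lemma Admissible.mul_const {h : ℝ → EuclideanSpace ℝ (Fin n) → ℂ} (hh : Admissible M h)
    (c : ℂ) : Admissible M (fun t x => h t x * c) := by
  obtain ⟨g, hg, hgb⟩ := hh.2.2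
  refine ⟨hh.1.mul_const c, ?_, fun t => g t * ‖c‖, hg.mul_const _, ?_⟩
  · filter_upwards [hh.2.1] with t h1 using h1.mul continuousOn_const
  · filter_upwards [hgb] with t h1 x hx
    rw [norm_mul]
    exact mul_le_mul_of_nonneg_right (h1 x hx) (norm_nonneg _)

lemma Admissible.sum {ι : Type*} (s : Finset ι) {h : ι → ℝ → EuclideanSpace ℝ (Fin n) → ℂ}
    (hh : ∀ i, Admissible M (h i)) : Admissible M (fun t x => ∑ i ∈ s, h i t x) := by
  classical
  induction s using Finset.induction_on with
  | empty =>
    simp only [Finset.sum_empty]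
    exact ⟨measurable_const, Eventually.of_forall fun _ => continuousOn_const, fun _ => 0,
      integrable_zero _ _ _, by simp⟩
  | insert i s hi ih =>
    simp only [Finset.sum_insert hi]
    exact (hh i).add ih

lemma Admissible.integrable {h : ℝ → EuclideanSpace ℝ (Fin n) → ℂ} (hh : Admissible M h)
    {x : EuclideanSpace ℝ (Fin n)} (hx : x ∈ closure M) : Integrable fun t => h t x := by
  obtain ⟨g, hg, hgb⟩ := hh.2.2
  exact hg.mono' (hh.1.comp (measurable_id.prodMk measurable_const)).aestronglyMeasurable
    (hgb.mono fun t ht => ht x hx)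

lemma Admissible.bound {h : ℝ → EuclideanSpace ℝ (Fin n) → ℂ} (hh : Admissible M h) :
    ∃ K : ℝ, ∀ x ∈ closure M, ∫ t, ‖h t x‖ ≤ K := by
  obtain ⟨g, hg, hgb⟩ := hh.2.2
  exact ⟨∫ t, g t, fun x hx =>
    integral_mono_ae (hh.integrable hx).norm hg (hgb.mono fun t ht => ht x hx)⟩

lemma Admissible.continuousOn_ft {h : ℝ → EuclideanSpace ℝ (Fin n) → ℂ} (hh : Admissible M h)
    (η : ℝ) : ContinuousOn (fun x => ft (fun t => h t x) η) (closure M) := by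
  obtain ⟨g, hg, hgb⟩ := hh.2.2
  simp only [ft]
  refine continuousOn_of_dominated (μ := volume) (s := closure M)
    (F := fun x (t : ℝ) => Complex.exp (-(Complex.I * (η : ℂ) * (t : ℂ))) * h t x)
    (bound := g) (fun x hx => ?_) (fun x hx => ?_) hg ?_
  · exact ((by fun_prop : Measurable fun t : ℝ =>
      Complex.exp (-(Complex.I * (η : ℂ) * (t : ℂ)))).mul
      (hh.1.comp (measurable_id.prodMk measurable_const))).aestronglyMeasurable
  · filter_upwards [hgb] with t ht
    rw [norm_mul, norm_phase, one_mul]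
    exact ht x hx
  · filter_upwards [hh.2.1] with t ht using continuousOn_const.mul ht

lemma integrable_phase_mul {u : ℝ → ℂ} (hu : Integrable u) (η : ℝ) :
    Integrable fun t : ℝ => Complex.exp (-(Complex.I * (η : ℂ) * (t : ℂ))) * u t := by
  refine hu.norm.mono' (((by fun_prop : Continuous fun t : ℝ =>
      Complex.exp (-(Complex.I * (η : ℂ) * (t : ℂ)))).aestronglyMeasurable).mul
      hu.aestronglyMeasurable) (Eventually.of_forall fun t => ?_)
  rw [norm_mul, norm_phase, one_mul]

lemma ft_add {u w : ℝ → ℂ} (hu : Integrable u) (hw : Integrable w) (η : ℝ) :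
    ft (fun t => u t + w t) η = ft u η + ft w η := by
  unfold ft
  rw [← integral_add (integrable_phase_mul hu η) (integrable_phase_mul hw η)]
  congr 1; ext t; ring

lemma ft_sub {u w : ℝ → ℂ} (hu : Integrable u) (hw : Integrable w) (η : ℝ) :
    ft (fun t => u t - w t) η = ft u η - ft w η := by
  unfold ft
  rw [← integral_sub (integrable_phase_mul hu η) (integrable_phase_mul hw η)]
  congr 1; ext t; ring

lemma ft_sum_mul {ι : Type*} (s : Finset ι) {u : ι → ℝ → ℂ} (hu : ∀ i, Integrable (u i))
    (c : ι → ℂ) (η : ℝ) :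
    ft (fun t => ∑ i ∈ s, u i t * c i) η = ∑ i ∈ s, ft (u i) η * c i := by
  unfold ft
  simp_rw [← integral_mul_const]
  rw [← integral_finsetSum _ fun i _ => (integrable_phase_mul (hu i) η).mul_const (c i)]
  congr 1; ext t
  rw [Finset.mul_sum]
  exact Finset.sum_congr rfl fun i _ => by ring

/-- Fubini along a line in space-time: the Fourier transform in `t` of the integral of `h` along
`s ↦ (t + c s, a + s w)` is the integral of `e^{iηcs} ĥ(η)` along the spatial projection. The value
`c = 1` gives light rays, `c = 0` purely spatial lines. -/
lemma ft_line {h : ℝ → EuclideanSpace ℝ (Fin n) → ℂ} (hh : Admissible M h) (c : ℝ)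
    {a w : EuclideanSpace ℝ (Fin n)} {A : Set ℝ} (hA : MeasurableSet A) (hAf : volume A < ⊤)
    (hAM : ∀ s ∈ A, a + s • w ∈ closure M) :
    Integrable (fun t => ∫ s in A, h (t + c * s) (a + s • w)) ∧
    ∀ η, ft (fun t => ∫ s in A, h (t + c * s) (a + s • w)) η =
      ∫ s in A, Complex.exp (Complex.I * (η : ℂ) * ((c * s : ℝ) : ℂ)) *
        ft (fun t => h t (a + s • w)) η := by
  obtain ⟨K, hK⟩ := hh.bound
  have := ft_integral (h := fun t s => h (t + c * s) (a + s • w))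
    (hh.1.comp (by fun_prop : Measurable fun q : ℝ × ℝ => (q.1 + c * q.2, a + q.2 • w)))
    hA hAf (K := K) fun s hs => ⟨(hh.integrable (hAM s hs)).comp_add_right _, ?_⟩
  · refine ⟨this.1, fun η => (this.2 η).trans ?_⟩
    congr 1; ext s
    exact ft_shift (fun t => h t (a + s • w)) η (c * s)
  · rw [integral_add_right_eq_self (fun t => ‖h t (a + s • w)‖)]
    exact hK _ (hAM s hs)

end Adm

/-! ### Segment integrals and gradients -/

section Line
variable {n : ℕ} {M : Set (EuclideanSpace ℝ (Fin n))}

/-- The integral of the one-form `F · dx` along the segment from `a` to `b`. -/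
noncomputable def lineInt (F : EuclideanSpace ℝ (Fin n) → EuclideanSpace ℂ (Fin n))
    (a b : EuclideanSpace ℝ (Fin n)) : ℂ :=
  ∫ s in Ioo (0 : ℝ) 1, ∑ i, F (a + s • (b - a)) i * (((b - a) i : ℝ) : ℂ)

lemma norm_pairing_le (w : EuclideanSpace ℂ (Fin n)) (u : EuclideanSpace ℝ (Fin n)) :
    ‖∑ i, w i * ((u i : ℝ) : ℂ)‖ ≤ n * (‖w‖ * ‖u‖) := by
  refine (norm_sum_le _ _).trans ?_
  refine (Finset.sum_le_card_nsmul _ _ (‖w‖ * ‖u‖) fun i _ => ?_).trans (by simp)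
  rw [norm_mul, Complex.norm_real]
  exact mul_le_mul (PiLp.norm_apply_le w i) (PiLp.norm_apply_le u i) (norm_nonneg _)
    (norm_nonneg _)

lemma norm_lineInt_le {F : EuclideanSpace ℝ (Fin n) → EuclideanSpace ℂ (Fin n)} {C : ℝ}
    (hF : ∀ x, ‖F x‖ ≤ C) (a b : EuclideanSpace ℝ (Fin n)) :
    ‖lineInt F a b‖ ≤ n * (C * ‖b - a‖) := by
  refine (norm_setIntegral_le_of_norm_le_const (C := n * (C * ‖b - a‖)) (by simp)
    fun s _ => (norm_pairing_le _ _).trans ?_).trans (by simp)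
  gcongr
  exact hF _

lemma segment_mem_closure (hMc : Convex ℝ M) {a b : EuclideanSpace ℝ (Fin n)}
    (ha : a ∈ closure M) (hb : b ∈ closure M) {s : ℝ} (hs : s ∈ Icc (0 : ℝ) 1) :
    a + s • (b - a) ∈ closure M :=
  hMc.closure.add_smul_sub_mem ha hb hs

lemma segment_mem (hMo : IsOpen M) (hMc : Convex ℝ M) {a b : EuclideanSpace ℝ (Fin n)}
    (ha : a ∈ closure M) (hb : b ∈ M) {s : ℝ} (hs : s ∈ Ioc (0 : ℝ) 1) :
    a + s • (b - a) ∈ M := by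
  have := hMc.add_smul_sub_mem_interior' ha (by rwa [hMo.interior_eq]) hs
  rwa [hMo.interior_eq] at this

lemma continuousOn_integrand {F : EuclideanSpace ℝ (Fin n) → EuclideanSpace ℂ (Fin n)}
    (hF : ContinuousOn F (closure M)) {X : Type*} [TopologicalSpace X]
    {γ u : X → EuclideanSpace ℝ (Fin n)} {S : Set X} (hγ : ContinuousOn γ S)
    (hu : ContinuousOn u S) (hS : ∀ x ∈ S, γ x ∈ closure M) :
    ContinuousOn (fun x => ∑ i, F (γ x) i * (((u x) i : ℝ) : ℂ)) S := by
  have h1 : ContinuousOn (fun x => F (γ x)) S := hF.comp hγ hS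
  refine continuousOn_finsetSum _ fun i _ => ?_
  exact ((PiLp.continuous_apply 2 _ i).comp_continuousOn h1).mul
    (Complex.continuous_ofReal.comp_continuousOn
      ((PiLp.continuous_apply 2 _ i).comp_continuousOn hu))

lemma continuousOn_lineInt (hMb : Bornology.IsBounded M) (hMc : Convex ℝ M)
    {F : EuclideanSpace ℝ (Fin n) → EuclideanSpace ℂ (Fin n)}
    (hF : ContinuousOn F (closure M)) {C : ℝ} (hC : ∀ x, ‖F x‖ ≤ C) :
    ContinuousOn (fun q : EuclideanSpace ℝ (Fin n) × EuclideanSpace ℝ (Fin n) =>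
      lineInt F q.1 q.2) (closure M ×ˢ closure M) := by
  obtain ⟨R, hR⟩ := hMb.closure.exists_norm_le
  unfold lineInt
  refine continuousOn_of_dominated (bound := fun _ => n * (C * (R + R))) (fun q hq => ?_)
    (fun q hq => Eventually.of_forall fun s => (norm_pairing_le _ _).trans ?_)
    (integrableOn_const (by simp)) ?_
  · refine ContinuousOn.aestronglyMeasurable ?_ measurableSet_Ioo
    exact continuousOn_integrand hF (by fun_prop) (by fun_prop) fun s hs =>
      segment_mem_closure hMc hq.1 hq.2 (Ioo_subset_Icc_self hs)
  · have := (norm_sub_le q.2 q.1).trans (add_le_add (hR _ hq.2) (hR _ hq.1))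
    have := (norm_nonneg _).trans (hC q.1)
    gcongr
    exact hC _
  · refine (ae_restrict_iff' measurableSet_Ioo).2 (Eventually.of_forall fun s hs => ?_)
    exact continuousOn_integrand hF (by fun_prop) (by fun_prop) fun q hq =>
      segment_mem_closure hMc hq.1 hq.2 (Ioo_subset_Icc_self hs)

lemma fderiv_eq_pairing (p : EuclideanSpace ℝ (Fin n) → ℂ) (y u : EuclideanSpace ℝ (Fin n)) :
    fderiv ℝ p y u = ∑ i, fderiv ℝ p y (EuclideanSpace.single i 1) * ((u i : ℝ) : ℂ) := by
  conv_lhs => rw [← (EuclideanSpace.basisFun (Fin n) ℝ).sum_repr u]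
  rw [map_sum]
  refine Finset.sum_congr rfl fun i _ => ?_
  rw [map_smul, Complex.real_smul, mul_comm]
  simp

/-- Fundamental theorem of calculus along a segment that lies in `M` except possibly for its
starting point. -/
lemma lineInt_gradient (hMo : IsOpen M) (hMc : Convex ℝ M)
    {p : EuclideanSpace ℝ (Fin n) → ℂ} (hp : ContDiffOn ℝ 1 p (closure M))
    {F : EuclideanSpace ℝ (Fin n) → EuclideanSpace ℂ (Fin n)}
    (hF : ContinuousOn F (closure M))
    (hFp : ∀ x ∈ M, ∀ i, F x i = fderiv ℝ p x (EuclideanSpace.single i 1))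
    {a b : EuclideanSpace ℝ (Fin n)} (ha : a ∈ closure M) (hb : b ∈ M) :
    lineInt F a b = p b - p a := by
  have hseg : ∀ s ∈ Icc (0 : ℝ) 1, a + s • (b - a) ∈ closure M := fun s hs =>
    segment_mem_closure hMc ha (subset_closure hb) hs
  have hci : ContinuousOn (fun s : ℝ => ∑ i, F (a + s • (b - a)) i * (((b - a) i : ℝ) : ℂ))
      (Icc 0 1) := continuousOn_integrand hF (by fun_prop) (by fun_prop) hseg
  have := intervalIntegral.integral_eq_sub_of_hasDerivAt_of_le (a := 0) (b := 1)
    (f := fun s : ℝ => p (a + s • (b - a))) zero_le_one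
    (hp.continuousOn.comp (by fun_prop) hseg) (f' := fun s : ℝ =>
      ∑ i, F (a + s • (b - a)) i * (((b - a) i : ℝ) : ℂ)) (fun s hs => ?_)
    (hci.intervalIntegrable_of_Icc zero_le_one)
  · rw [intervalIntegral.integral_of_le zero_le_one, integral_Ioc_eq_integral_Ioo] at this
    simpa [lineInt] using this
  · have hm := segment_mem hMo hMc ha hb (Ioo_subset_Ioc_self hs)
    have hd : DifferentiableAt ℝ p (a + s • (b - a)) :=
      ((hp.mono subset_closure).differentiableOn one_ne_zero).differentiableAt (hMo.mem_nhds hm)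
    have hγ : HasDerivAt (fun s : ℝ => a + s • (b - a)) (b - a) s := by
      simpa using ((hasDerivAt_id s).smul_const (b - a)).const_add a
    have := hd.hasFDerivAt.comp_hasDerivAt s hγ
    rw [fderiv_eq_pairing] at this
    simpa only [hFp _ hm] using! this

/-- A function whose increments in `M` are the segment integrals of a continuous field `F` has
gradient `F`. -/
lemma hasFDerivAt_of_lineInt (hMo : IsOpen M) (hMc : Convex ℝ M)
    {F : EuclideanSpace ℝ (Fin n) → EuclideanSpace ℂ (Fin n)}
    (hF : ContinuousOn F (closure M)) {P : EuclideanSpace ℝ (Fin n) → ℂ}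
    (hP : ∀ x ∈ M, ∀ y ∈ M, P y - P x = lineInt F x y) {x : EuclideanSpace ℝ (Fin n)}
    (hx : x ∈ M) :
    DifferentiableAt ℝ P x ∧ ∀ i, F x i = fderiv ℝ P x (EuclideanSpace.single i 1) := by
  set L : EuclideanSpace ℝ (Fin n) →L[ℝ] ℂ :=
    ∑ i, ((EuclideanSpace.proj i : EuclideanSpace ℝ (Fin n) →L[ℝ] ℝ).smulRight (F x i)) with hL
  have hLa : ∀ u, L u = ∑ i, F x i * ((u i : ℝ) : ℂ) := fun u => by
    simp [hL, mul_comm]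
  have hd : HasFDerivAt P L x := by
    rw [hasFDerivAt_iff_isLittleO, Asymptotics.isLittleO_iff]
    intro ε hε
    have hFx : ContinuousAt F x :=
      hF.continuousAt (mem_of_superset (hMo.mem_nhds hx) subset_closure)
    have hev : ∀ᶠ y in 𝓝 x, y ∈ M := hMo.mem_nhds hx
    obtain ⟨δ, hδ, hball⟩ := Metric.eventually_nhds_iff_ball.1
      (hev.and
        (Metric.tendsto_nhds.1 hFx (ε / (n + 1)) (by positivity)))
    filter_upwards [Metric.ball_mem_nhds x hδ] with y hy
    have hyM := (hball y hy).1
    -- the error is the segment integral of `F - F x`, and `F` varies by at most `ε / (n + 1)` on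
    -- the ball; the factor `n` comes from `norm_pairing_le`
    rw [hP x hx y hyM, hLa]
    have hball' : ∀ s ∈ Ioo (0 : ℝ) 1, x + s • (y - x) ∈ Metric.ball x δ := fun s hs =>
      (convex_ball x δ).add_smul_sub_mem (Metric.mem_ball_self hδ) hy (Ioo_subset_Icc_self hs)
    have hint : IntegrableOn (fun s : ℝ => ∑ i, F (x + s • (y - x)) i *
        (((y - x) i : ℝ) : ℂ)) (Ioo 0 1) := by
      refine IntegrableOn.mono_set (ContinuousOn.integrableOn_Icc ?_) Ioo_subset_Icc_self
      exact continuousOn_integrand hF (by fun_prop) (by fun_prop) fun s hs =>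
        segment_mem_closure hMc (subset_closure hx) (subset_closure hyM) hs
    have hconst : ∑ i, F x i * (((y - x) i : ℝ) : ℂ) =
        ∫ s in Ioo (0 : ℝ) 1, ∑ i, F x i * (((y - x) i : ℝ) : ℂ) := by simp
    rw [hconst, lineInt, ← integral_sub hint (integrableOn_const (by simp))]
    refine (norm_setIntegral_le_of_norm_le_const (C := ε * ‖y - x‖) (by simp)
      fun s hs => ?_).trans (by simp)
    rw [← Finset.sum_sub_distrib]
    have h1 := norm_pairing_le (F (x + s • (y - x)) - F x) (y - x)
    have h2 := (hball _ (hball' s hs)).2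
    rw [dist_eq_norm] at h2
    calc _ = ‖∑ i, (F (x + s • (y - x)) - F x) i * (((y - x) i : ℝ) : ℂ)‖ := by
            congr 1; refine Finset.sum_congr rfl fun i _ => ?_
            rw [← sub_mul]; rfl
      _ ≤ n * (‖F (x + s • (y - x)) - F x‖ * ‖y - x‖) := h1
      _ ≤ n * (ε / (n + 1) * ‖y - x‖) := by gcongr
      _ = (n / (n + 1)) * (ε * ‖y - x‖) := by field_simp
      _ ≤ 1 * (ε * ‖y - x‖) := by
            gcongr
            rw [div_le_one (by positivity)]; linarith
      _ = _ := one_mul _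
  refine ⟨hd.differentiableAt, fun i => ?_⟩
  rw [hd.fderiv, hLa]
  simp [apply_ite (Complex.ofReal)]

end Line

/-! ### From the light ray transform to the attenuated X-ray transform -/

section Core
variable {n : ℕ} {M : Set (EuclideanSpace ℝ (Fin n))}

/-- Taking the Fourier transform in `t` turns the light ray transform into the attenuated X-ray
transform with attenuation `iη`: almost everywhere by Fubini, then everywhere by continuity. -/
lemma attenuated_eq_zero (hMb : Bornology.IsBounded M) (hMo : IsOpen M) (hMc : Convex ℝ M)
    {f₁ : ℝ → EuclideanSpace ℝ (Fin n) → EuclideanSpace ℂ (Fin n)}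
    {f₀ : ℝ → EuclideanSpace ℝ (Fin n) → ℂ}
    (hadm₁ : ∀ i, Admissible M fun t x => f₁ t x i) (hadm₀ : Admissible M f₀)
    (hLray : ∀ᵐ q ∂((volume : Measure ℝ).prod ((volume.restrict M).prod (sphereMeasure n))),
      (∫ s in (-(backExitTime M q.2.1 (q.2.2 : EuclideanSpace ℝ (Fin n))))..(exitTime M q.2.1
          (q.2.2 : EuclideanSpace ℝ (Fin n))),
        ((∑ i, f₁ (q.1 + s) (q.2.1 + s • (q.2.2 : EuclideanSpace ℝ (Fin n))) i *
            (((q.2.2 : EuclideanSpace ℝ (Fin n)) i : ℝ) : ℂ)) +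
          f₀ (q.1 + s) (q.2.1 + s • (q.2.2 : EuclideanSpace ℝ (Fin n))))) = 0)
    (η : ℝ) {x : EuclideanSpace ℝ (Fin n)} (hx : x ∈ M) {v : EuclideanSpace ℝ (Fin n)}
    (hv : ‖v‖ = 1) :
    (∫ s in (-(backExitTime M x v))..(exitTime M x v),
      Complex.exp (Complex.I * (η : ℂ) * (s : ℂ)) *
        ((∑ i, ft (fun t => f₁ t (x + s • v) i) η * ((v i : ℝ) : ℂ)) +
          ft (fun t => f₀ t (x + s • v)) η)) = 0 := by
  have hvS : v ∈ sphere (0 : EuclideanSpace ℝ (Fin n)) 1 := by simpa using hv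
  -- the transformed fields are continuous on the compact set `cl M`, hence bounded, so that their
  -- chord integrals are continuous in `(x, v)`
  have hc₁ : ∀ i, ContinuousOn (fun x => ft (fun t => f₁ t x i) η) (closure M) := fun i =>
    (hadm₁ i).continuousOn_ft η
  have hc₀ := hadm₀.continuousOn_ft η
  have hcomp : IsCompact (closure M) := hMb.isCompact_closure
  have hK : ∃ K : ℝ, ∀ s : ℝ, ∀ y ∈ M, ∀ v : EuclideanSpace ℝ (Fin n), ‖v‖ = 1 →
      ‖Complex.exp (Complex.I * (η : ℂ) * (s : ℂ)) *
        ((∑ i, ft (fun t => f₁ t y i) η * ((v i : ℝ) : ℂ)) + ft (fun t => f₀ t y) η)‖ ≤ K := by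
    choose K hK using fun i => hcomp.exists_bound_of_continuousOn (hc₁ i)
    obtain ⟨K₀, hK₀⟩ := hcomp.exists_bound_of_continuousOn hc₀
    refine ⟨(∑ i, K i) + K₀, fun s y hy v hv => ?_⟩
    have hy' := subset_closure hy
    have he : ‖Complex.exp (Complex.I * (η : ℂ) * (s : ℂ))‖ = 1 := by
      rw [Complex.norm_exp]; simp
    rw [norm_mul, he, one_mul]
    refine (norm_add_le _ _).trans (add_le_add ((norm_sum_le _ _).trans
      (Finset.sum_le_sum fun i _ => ?_)) (hK₀ y hy'))
    rw [norm_mul, Complex.norm_real]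
    have h1 := PiLp.norm_apply_le v i
    rw [hv] at h1
    exact (mul_le_of_le_one_right (norm_nonneg _) h1).trans (hK i y hy')
  obtain ⟨K, hK⟩ := hK
  have hcont := continuousAt_chord hMb hMo hMc (k := fun s y v =>
      Complex.exp (Complex.I * (η : ℂ) * (s : ℂ)) *
        ((∑ i, ft (fun t => f₁ t y i) η * ((v i : ℝ) : ℂ)) + ft (fun t => f₀ t y) η))
    (by
      refine ContinuousOn.mul (by fun_prop) (ContinuousOn.add
        (continuousOn_finsetSum _ fun i _ => ContinuousOn.mul ?_ (by fun_prop)) ?_)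
      · exact (hc₁ i).comp (f := fun q : ℝ × EuclideanSpace ℝ (Fin n) ×
          EuclideanSpace ℝ (Fin n) => q.2.1) (by fun_prop) fun q hq => subset_closure hq
      · exact hc₀.comp (f := fun q : ℝ × EuclideanSpace ℝ (Fin n) ×
          EuclideanSpace ℝ (Fin n) => q.2.1) (by fun_prop) fun q hq => subset_closure hq)
    hK hx ⟨v, hvS⟩
  rw [integral_chord hMb hMo hMc hx hv]
  refine eq_zero_of_ae_of_continuousAt hMo ?_ hx ⟨v, hvS⟩ hcont
  -- for almost every `(x, v)` the hypothesis holds for almost every `t`, so the Fourier transform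
  -- in `t` of the light ray transform vanishes there
  have hsw := Measure.ae_ae_of_ae_prod (Measure.measurePreserving_swap (μ := (volume.restrict
    M).prod (sphereMeasure n)) (ν := (volume : Measure ℝ)) |>.quasiMeasurePreserving.ae hLray)
  have hM : ∀ᵐ q ∂((volume.restrict M).prod (sphereMeasure n)), q.1 ∈ M :=
    Measure.quasiMeasurePreserving_fst.ae (ae_restrict_mem hMo.measurableSet)
  filter_upwards [hsw, hM] with ⟨y, w⟩ hyw hy
  have hw : ‖(w : EuclideanSpace ℝ (Fin n))‖ = 1 := by simp
  have hadm : Admissible M fun t x =>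
      (∑ i, f₁ t x i * (((w : EuclideanSpace ℝ (Fin n)) i : ℝ) : ℂ)) + f₀ t x :=
    (Admissible.sum _ fun i => (hadm₁ i).mul_const _).add hadm₀
  simp only [Prod.swap] at hyw hy ⊢
  have hA : MeasurableSet {s : ℝ | y + s • (w : EuclideanSpace ℝ (Fin n)) ∈ M} :=
    (hMo.preimage (by fun_prop)).measurableSet
  have hAf : volume {s : ℝ | y + s • (w : EuclideanSpace ℝ (Fin n)) ∈ M} < ⊤ := by
    rw [chord_eq hMb hMo hMc hy hw]; simp
  have hline := (ft_line hadm 1 hA hAf fun s hs => subset_closure hs).2 η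
  have hz : ft (fun t => ∫ s in {s : ℝ | y + s • (w : EuclideanSpace ℝ (Fin n)) ∈ M},
      ((∑ i, f₁ (t + 1 * s) (y + s • (w : EuclideanSpace ℝ (Fin n))) i *
        (((w : EuclideanSpace ℝ (Fin n)) i : ℝ) : ℂ)) +
        f₀ (t + 1 * s) (y + s • (w : EuclideanSpace ℝ (Fin n))))) η = 0 := by
    unfold ft
    refine integral_eq_zero_of_ae ?_
    filter_upwards [hyw] with t ht
    rw [integral_chord hMb hMo hMc hy hw] at ht
    simp only [one_mul]
    rw [ht, mul_zero]; rfl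
  rw [hz] at hline
  rw [hline]
  refine setIntegral_congr_fun hA fun s hs => ?_
  have hs' : y + s • (w : EuclideanSpace ℝ (Fin n)) ∈ closure M := subset_closure hs
  simp only [one_mul]
  rw [ft_add ((Admissible.sum _ fun i => (hadm₁ i).mul_const _).integrable hs')
    (hadm₀.integrable hs'), ft_sum_mul _ fun i => (hadm₁ i).integrable hs']

/-- The gauge potential at frequency `η`. Segments from `cl M` into `M` compute its increments, and
these are the Fourier transforms of the segment integrals of `f₁`. -/
lemma exists_potential (hMb : Bornology.IsBounded M) (hMo : IsOpen M) (hMc : Convex ℝ M) {η : ℝ}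
    (hInj : ∀ g₁ : EuclideanSpace ℝ (Fin n) → EuclideanSpace ℂ (Fin n),
      ∀ g₀ : EuclideanSpace ℝ (Fin n) → ℂ,
      ContinuousOn g₁ (closure M) → ContinuousOn g₀ (closure M) →
      (∀ x ∈ M, ∀ v : EuclideanSpace ℝ (Fin n), ‖v‖ = 1 →
        (∫ s in (-(backExitTime M x v))..(exitTime M x v),
          Complex.exp (Complex.I * (η : ℂ) * (s : ℂ)) *
            ((∑ i, g₁ (x + s • v) i * ((v i : ℝ) : ℂ)) + g₀ (x + s • v))) = 0) →
      ∃ p : EuclideanSpace ℝ (Fin n) → ℂ, ContDiffOn ℝ 1 p (closure M) ∧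
        (∀ x ∈ frontier M, p x = 0) ∧
        (∀ x ∈ M, (∀ i, g₁ x i = fderiv ℝ p x (EuclideanSpace.single i 1)) ∧
          g₀ x = Complex.I * (η : ℂ) * p x))
    {f₁ : ℝ → EuclideanSpace ℝ (Fin n) → EuclideanSpace ℂ (Fin n)}
    {f₀ : ℝ → EuclideanSpace ℝ (Fin n) → ℂ}
    (hadm₁ : ∀ i, Admissible M fun t x => f₁ t x i) (hadm₀ : Admissible M f₀)
    (hLray : ∀ᵐ q ∂((volume : Measure ℝ).prod ((volume.restrict M).prod (sphereMeasure n))),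
      (∫ s in (-(backExitTime M q.2.1 (q.2.2 : EuclideanSpace ℝ (Fin n))))..(exitTime M q.2.1
          (q.2.2 : EuclideanSpace ℝ (Fin n))),
        ((∑ i, f₁ (q.1 + s) (q.2.1 + s • (q.2.2 : EuclideanSpace ℝ (Fin n))) i *
            (((q.2.2 : EuclideanSpace ℝ (Fin n)) i : ℝ) : ℂ)) +
          f₀ (q.1 + s) (q.2.1 + s • (q.2.2 : EuclideanSpace ℝ (Fin n))))) = 0) :
    ∃ p : EuclideanSpace ℝ (Fin n) → ℂ,
      (∀ x ∈ frontier M, p x = 0) ∧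
      (∀ a ∈ closure M, ∀ b ∈ M, Integrable (fun t => lineInt (f₁ t) a b) ∧
        ft (fun t => lineInt (f₁ t) a b) η = p b - p a) ∧
      ∀ x ∈ M, ft (fun t => f₀ t x) η = Complex.I * (η : ℂ) * p x := by
  have hG : ContinuousOn (fun x => WithLp.toLp 2 fun i => ft (fun t => f₁ t x i) η :
      EuclideanSpace ℝ (Fin n) → EuclideanSpace ℂ (Fin n)) (closure M) :=
    (PiLp.continuous_toLp 2 _).comp_continuousOn
      (continuousOn_pi.2 fun i => (hadm₁ i).continuousOn_ft η)
  obtain ⟨p, hp, hp0, hpM⟩ := hInj _ (fun x => ft (fun t => f₀ t x) η) hG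
    (hadm₀.continuousOn_ft η)
    fun x hx v hv => attenuated_eq_zero hMb hMo hMc hadm₁ hadm₀ hLray η hx hv
  refine ⟨p, hp0, fun a ha b hb => ?_, fun x hx => (hpM x hx).2⟩
  have hseg : ∀ s ∈ Ioo (0 : ℝ) 1, a + s • (b - a) ∈ closure M := fun s hs =>
    segment_mem_closure hMc ha (subset_closure hb) (Ioo_subset_Icc_self hs)
  have hline := ft_line (Admissible.sum Finset.univ fun i =>
    (hadm₁ i).mul_const (((b - a) i : ℝ) : ℂ)) 0 measurableSet_Ioo (by simp) hseg
  simp only [zero_mul, add_zero] at hline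
  refine ⟨hline.1, (hline.2 η).trans ?_⟩
  rw [← lineInt_gradient hMo hMc hp hG (fun x hx => (hpM x hx).1) ha hb, lineInt]
  refine setIntegral_congr_fun measurableSet_Ioo fun s hs => ?_
  simp only [Complex.ofReal_zero, mul_zero, Complex.exp_zero, one_mul]
  rw [ft_sum_mul _ fun i => (hadm₁ i).integrable (hseg s hs)]

end Core

end LightRay

/-- Injectivity, up to gauge, of the light ray transform of one-forms
`f = f₁·dx + f₀·dt` on `ℝ × M`, assuming s-injectivity for degree 1 of the attenuated X-ray
transform at every frequency `η ∈ ℝ`. -/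
theorem stmt_14 {n : ℕ} (hn : 2 ≤ n) (M : Set (EuclideanSpace ℝ (Fin n)))
    (hMb : Bornology.IsBounded M) (hMo : IsOpen M) (hMc : Convex ℝ M)
    -- s-injectivity for degree 1 of the attenuated X-ray transform, for every frequency η:
    (hInj : ∀ η : ℝ, ∀ g₁ : EuclideanSpace ℝ (Fin n) → EuclideanSpace ℂ (Fin n),
      ∀ g₀ : EuclideanSpace ℝ (Fin n) → ℂ,
      ContinuousOn g₁ (closure M) → ContinuousOn g₀ (closure M) →
      (∀ x ∈ M, ∀ v : EuclideanSpace ℝ (Fin n), ‖v‖ = 1 →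
        (∫ s in (-(backExitTime M x v))..(exitTime M x v),
          Complex.exp (Complex.I * (η : ℂ) * (s : ℂ)) *
            ((∑ i, g₁ (x + s • v) i * ((v i : ℝ) : ℂ)) + g₀ (x + s • v))) = 0) →
      ∃ p : EuclideanSpace ℝ (Fin n) → ℂ, ContDiffOn ℝ 1 p (closure M) ∧
        (∀ x ∈ frontier M, p x = 0) ∧
        (∀ x ∈ M, (∀ i, g₁ x i = fderiv ℝ p x (EuclideanSpace.single i 1)) ∧
          g₀ x = Complex.I * (η : ℂ) * p x))
    (f₁ : ℝ → EuclideanSpace ℝ (Fin n) → EuclideanSpace ℂ (Fin n))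
    (f₀ : ℝ → EuclideanSpace ℝ (Fin n) → ℂ)
    (hf₁m : ∀ i : Fin n, Measurable fun q : ℝ × EuclideanSpace ℝ (Fin n) => f₁ q.1 q.2 i)
    (hf₀m : Measurable fun q : ℝ × EuclideanSpace ℝ (Fin n) => f₀ q.1 q.2)
    (hfb : ∃ C : ℝ, ∀ t x, ‖f₁ t x‖ ≤ C ∧ ‖f₀ t x‖ ≤ C)
    (hfcont : ∀ᵐ t : ℝ, ContinuousOn (f₁ t) (closure M) ∧ ContinuousOn (f₀ t) (closure M))
    (hfint : ∃ g : ℝ → ℝ, Integrable g ∧ ∀ t : ℝ, ∀ x ∈ M, ‖f₁ t x‖ + ‖f₀ t x‖ ≤ g t)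
    -- vanishing of the light ray transform of the one-form f = f₁·dx + f₀·dt:
    (hLray : ∀ᵐ q ∂(volume.prod ((volume.restrict M).prod (sphereMeasure n))),
      (∫ s in (-(backExitTime M q.2.1 (q.2.2 : EuclideanSpace ℝ (Fin n))))..(exitTime M q.2.1
          (q.2.2 : EuclideanSpace ℝ (Fin n))),
        ((∑ i, f₁ (q.1 + s) (q.2.1 + s • (q.2.2 : EuclideanSpace ℝ (Fin n))) i *
            (((q.2.2 : EuclideanSpace ℝ (Fin n)) i : ℝ) : ℂ)) +
          f₀ (q.1 + s) (q.2.1 + s • (q.2.2 : EuclideanSpace ℝ (Fin n))))) = 0) :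
    -- conclusion: f = d̄ˢp is exact, with p bounded and vanishing on ℝ × ∂M
    ∃ p : ℝ → EuclideanSpace ℝ (Fin n) → ℂ,
      (∃ C : ℝ, ∀ t x, ‖p t x‖ ≤ C) ∧
      (∀ t : ℝ, ∀ x ∈ frontier M, p t x = 0) ∧
      (∀ᵐ t : ℝ, ∀ x ∈ M, DifferentiableAt ℝ (p t) x ∧
        ∀ i, f₁ t x i = fderiv ℝ (p t) x (EuclideanSpace.single i 1)) ∧
      (∀ᵐ x ∂(volume.restrict M), ∀ ψ : ℝ → ℂ, ContDiff ℝ (⊤ : ℕ∞) ψ → HasCompactSupport ψ →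
        (∫ t : ℝ, f₀ t x * ψ t) = -∫ t : ℝ, p t x * deriv ψ t) := by
  classical
  rcases M.eq_empty_or_nonempty with rfl | hMne
  · exact ⟨fun _ _ => 0, ⟨0, by simp⟩, by simp, by simp, by simp⟩
  obtain ⟨C, hC⟩ := hfb
  obtain ⟨g, hg, hgb⟩ := hfint
  have hadm₁ : ∀ i, LightRay.Admissible M fun t x => f₁ t x i := fun i =>
    .of_le (hf₁m i) (hfcont.mono fun t ht =>
      (PiLp.continuous_apply 2 _ i).comp_continuousOn ht.1) hg fun t x hx =>
      ((PiLp.norm_apply_le _ i).trans (le_add_of_nonneg_right (norm_nonneg _))).trans (hgb t x hx)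
  have hadm₀ : LightRay.Admissible M f₀ := .of_le hf₀m (hfcont.mono fun t ht => ht.2) hg
    fun t x hx => (le_add_of_nonneg_left (norm_nonneg _)).trans (hgb t x hx)
  have hpot : ∀ η : ℝ, ∃ p : EuclideanSpace ℝ (Fin n) → ℂ,
      (∀ x ∈ frontier M, p x = 0) ∧
      (∀ a ∈ closure M, ∀ b ∈ M, Integrable (fun t => LightRay.lineInt (f₁ t) a b) ∧
        LightRay.ft (fun t => LightRay.lineInt (f₁ t) a b) η = p b - p a) ∧
      ∀ x ∈ M, LightRay.ft (fun t => f₀ t x) η = Complex.I * (η : ℂ) * p x := by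
    intro η
    exact LightRay.exists_potential hMb hMo hMc (hInj η) hadm₁ hadm₀ hLray
  choose q hq0 hqL hqf using hpot
  obtain ⟨x₀, hx₀⟩ : (frontier M).Nonempty := by
    have : Nonempty (Fin n) := ⟨⟨0, by omega⟩⟩
    rw [Set.nonempty_iff_ne_empty]
    intro hfr
    rcases frontier_eq_empty_iff.1 hfr with h | h
    · exact hMne.ne_empty h
    · exact NormedSpace.unbounded_univ ℝ (EuclideanSpace ℝ (Fin n)) (h ▸ hMb)
  have hx₀c : x₀ ∈ closure M := frontier_subset_closure hx₀
  -- `f₁(t,·)` has vanishing circulation around the triangle `x₀, x, y`, since its Fourier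
  -- transform does
  have htri : ∀ x ∈ M, ∀ y ∈ M, ∀ᵐ t : ℝ,
      LightRay.lineInt (f₁ t) x₀ y - LightRay.lineInt (f₁ t) x₀ x =
        LightRay.lineInt (f₁ t) x y := by
    intro x hx y hy
    have i1 := fun η => hqL η x₀ hx₀c y hy
    have i2 := fun η => hqL η x₀ hx₀c x hx
    have i3 := fun η => hqL η x (subset_closure hx) y hy
    have := LightRay.ae_zero_of_ft (((i1 0).1.sub (i2 0).1).sub (i3 0).1) fun η => by
      refine (LightRay.ft_sub ((i1 0).1.sub (i2 0).1) (i3 0).1 η).trans ?_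
      refine (congrArg (· - _) (LightRay.ft_sub (i1 0).1 (i2 0).1 η)).trans ?_
      rw [(i1 η).2, (i2 η).2, (i3 η).2]; ring
    filter_upwards [this] with t ht
    exact sub_eq_zero.1 ht
  -- a countable dense set of triangles suffices for almost every `t`
  have hall : ∀ᵐ t : ℝ, ∀ x ∈ M, ∀ y ∈ M,
      LightRay.lineInt (f₁ t) x₀ y - LightRay.lineInt (f₁ t) x₀ x =
        LightRay.lineInt (f₁ t) x y := by
    have : Nonempty M := hMne.to_subtype
    have hd := TopologicalSpace.denseRange_denseSeq M
    have hcount : ∀ᵐ t : ℝ, ∀ i j : ℕ,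
        LightRay.lineInt (f₁ t) x₀ (TopologicalSpace.denseSeq M j) -
          LightRay.lineInt (f₁ t) x₀ (TopologicalSpace.denseSeq M i) =
        LightRay.lineInt (f₁ t) (TopologicalSpace.denseSeq M i)
          (TopologicalSpace.denseSeq M j) :=
      ae_all_iff.2 fun i => ae_all_iff.2 fun j => htri _ (Subtype.prop _) _ (Subtype.prop _)
    filter_upwards [hcount, hfcont] with t ht htc
    have hL := LightRay.continuousOn_lineInt hMb hMc htc.1 fun x => (hC t x).1
    have hc1 : Continuous fun y : M => LightRay.lineInt (f₁ t) x₀ y :=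
      hL.comp_continuous (f := fun y : M => (x₀, (y : EuclideanSpace ℝ (Fin n))))
        (by fun_prop) fun y => ⟨hx₀c, subset_closure y.2⟩
    have hc2 : Continuous fun r : M × M => LightRay.lineInt (f₁ t) r.1 r.2 :=
      hL.comp_continuous (f := fun r : M × M =>
        ((r.1 : EuclideanSpace ℝ (Fin n)), (r.2 : EuclideanSpace ℝ (Fin n))))
        (by fun_prop) fun r => ⟨subset_closure r.1.2, subset_closure r.2.2⟩
    have heq := (hd.prodMap hd).equalizer
      ((hc1.comp continuous_snd).sub (hc1.comp continuous_fst)) hc2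
      (funext fun ij => ht ij.1 ij.2)
    exact fun x hx y hy => congrFun heq (⟨x, hx⟩, ⟨y, hy⟩)
  -- the junk value `0` off `M` provides the boundary condition; it is the right one because
  -- each `q η` vanishes at `x₀`
  refine ⟨fun t x => if x ∈ M then LightRay.lineInt (f₁ t) x₀ x else 0, ?_, ?_, ?_, ?_⟩
  · obtain ⟨R, hR⟩ := hMb.closure.exists_norm_le
    have hC0 : 0 ≤ C := (norm_nonneg _).trans (hC 0 x₀).1
    have hR0 : 0 ≤ R := (norm_nonneg _).trans (hR x₀ hx₀c)
    refine ⟨n * (C * (R + R)), fun t x => ?_⟩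
    beta_reduce
    split_ifs with hx
    · have := (norm_sub_le x x₀).trans (add_le_add (hR _ (subset_closure hx)) (hR _ hx₀c))
      refine (LightRay.norm_lineInt_le (fun y => (hC t y).1) x₀ x).trans ?_
      gcongr
    · rw [norm_zero]; positivity
  · intro t x hx
    rw [hMo.frontier_eq] at hx
    exact if_neg hx.2
  · filter_upwards [hall, hfcont] with t ht htc x hx
    refine LightRay.hasFDerivAt_of_lineInt hMo hMc htc.1 (fun y hy z hz => ?_) hx
    rw [if_pos hy, if_pos hz]
    exact ht y hy z hz
  · filter_upwards [ae_restrict_mem hMo.measurableSet] with x hx ψ hψ hψc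
    have hL := fun η => hqL η x₀ hx₀c x hx
    refine (LightRay.distrib_deriv_of_ft (hL 0).1 (hadm₀.integrable (subset_closure hx))
      (fun η => ?_) hψ hψc).trans ?_
    · rw [hqf η x hx, (hL η).2, hq0 η x₀ hx₀, sub_zero]
    · simp only [if_pos hx]
end
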